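/- arXiv:1402.2750 — 5 statements merged into one kernel-verified Lean document; each statement's English description precedes it below -/
import Mathlib

section
/- Let n ≥ 3 be an integer, let k be an integer with 2 ≤ k ≤ n−1, let s ≥ 0 be an even integer, and let f be a harmonic homogeneous polynomial of degree s on ℝⁿ. Then for every v ∈ S^{n−1} the integral ∫_{S^{n−1}} f(u)·(1 − ⟨u,v⟩²)^{(k−n)/2} dσ(u) converges and equals (ω_{n−1}·ω_k / ω_{k−1}) · [Γ((n−1)/2)·Γ(k/2)·Γ((s+n−k)/2)·Γ((s+1)/2)] / [Γ(1/2)·Γ((n−k)/2)·Γ((s+k)/2)·Γ((s+n−1)/2)] · f(v). -/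
open MeasureTheory
open scoped RealInnerProductSpace

/-- The second partial derivative `∂²f/∂yᵢ∂yⱼ` of `f : ℝⁿ → ℝ` at `y`. -/
noncomputable def secondPartialDeriv {n : ℕ} (f : EuclideanSpace ℝ (Fin n) → ℝ) (i j : Fin n)
    (y : EuclideanSpace ℝ (Fin n)) : ℝ :=
  fderiv ℝ (fun z => fderiv ℝ f z (EuclideanSpace.single j 1)) y (EuclideanSpace.single i 1)

/-- `f : ℝⁿ → ℝ` is a harmonic polynomial, homogeneous of degree `s`: it is a polynomial
function, `f (t • y) = t ^ s * f y` for `t > 0`, and `∑ i, ∂²f/∂yᵢ² = 0`. -/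
def IsHarmonicHomogeneous (n s : ℕ) (f : EuclideanSpace ℝ (Fin n) → ℝ) : Prop :=
  (∃ p : MvPolynomial (Fin n) ℝ, ∀ y, f y = MvPolynomial.eval (fun i => y i) p) ∧
  (∀ t : ℝ, 0 < t → ∀ y, f (t • y) = t ^ s * f y) ∧
  (∀ y, ∑ i, secondPartialDeriv f i i y = 0)

/-- The spherical Lebesgue (surface area) measure on the unit sphere `S^{n-1} ⊆ ℝⁿ`. -/
noncomputable def sphereMeasure (n : ℕ) :
    Measure (Metric.sphere (0 : EuclideanSpace ℝ (Fin n)) 1) :=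
  (volume : Measure (EuclideanSpace ℝ (Fin n))).toSphere

/-- `ω m = 2 π^{m/2} / Γ(m/2)`, the surface area of the unit sphere in `ℝ^m`. -/
noncomputable def ω (m : ℝ) : ℝ := 2 * Real.pi ^ (m / 2) / Real.Gamma (m / 2)

/-!
On `ℝⁿ` with `a = (n - k) / 2`, polar coordinates express the integral of `f(u) (1 - ⟨u,v⟩²)^{-a}`
over the sphere through that of `f(x) (‖x‖² - ⟨x,v⟩²)^{-a} e^{-‖x‖²}` over the whole space. The
singular factor is a Gamma superposition of the Gaussians `e^{-l (‖x‖² - ⟨x,v⟩²)}`, and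
`e^{l ⟨x,v⟩²}` is itself a one-dimensional Gaussian average of the exponentials `e^{2 b ⟨x,v⟩ z}`,
where `b = 1 + l`. Completing the square in `x` leaves `f` integrated against a Gaussian centred
at `z v`, which by the mean value property of harmonic polynomials is a multiple of
`f (z v) = z^s f(v)`. The remaining integrals over `z`, `l` and `r` are Gamma and Beta integrals.

The Gaussian mean value property is proved algebraically. After a translation the Gaussian is
centred at `0`. A homogeneous harmonic `q` of degree `m > 0` then has Gaussian integral zero:
`m q = ∑ i, x_i ∂_i q` by Euler, and integrating by parts against the Gaussian turns the right-hand
side into a multiple of the integral of `Δ q = 0`.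
-/

section Laplacian

open MvPolynomial

variable {σ R : Type*} [CommSemiring R]

theorem pderiv_homogeneousComponent_succ (n : ℕ) (i : σ) (p : MvPolynomial σ R) :
    pderiv i (homogeneousComponent (n + 1) p) = homogeneousComponent n (pderiv i p) := by
  ext m
  have hdeg : (m + Finsupp.single i 1).degree = n + 1 ↔ m.degree = n := by
    simp [map_add]
  simp only [coeff_pderiv, coeff_homogeneousComponent, hdeg, ite_mul, zero_mul]

/-- The formal Laplacian `∑ i, ∂²p/∂Xᵢ²` of a polynomial, as a linear map; harmonicity of
polynomial functions is handled algebraically through its kernel. -/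
noncomputable def mvLaplacian [Fintype σ] : MvPolynomial σ R →ₗ[R] MvPolynomial σ R :=
  ∑ i, (pderiv i).toLinearMap ∘ₗ (pderiv i).toLinearMap

theorem mvLaplacian_apply [Fintype σ] (p : MvPolynomial σ R) :
    mvLaplacian p = ∑ i, pderiv i (pderiv i p) := by
  simp [mvLaplacian]

theorem mvLaplacian_homogeneousComponent_eq_zero [Fintype σ] {p : MvPolynomial σ R}
    (hp : mvLaplacian p = 0) (n : ℕ) : mvLaplacian (homogeneousComponent n p) = 0 := by
  rw [mvLaplacian_apply] at hp ⊢
  match n with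
  | 0 => simp only [homogeneousComponent_zero, pderiv_C, map_zero, Finset.sum_const_zero]
  | 1 => simp only [pderiv_homogeneousComponent_succ, homogeneousComponent_zero, pderiv_C,
      Finset.sum_const_zero]
  | n + 2 => simp only [pderiv_homogeneousComponent_succ, ← map_sum, hp, map_zero]

/-- The translate `p(X + a)` of a polynomial `p`, as an algebra endomorphism; it moves the centre
of a Gaussian to the origin. -/
noncomputable def mvTranslate (a : σ → R) : MvPolynomial σ R →ₐ[R] MvPolynomial σ R :=
  aeval fun i => X i + C (a i)

theorem mvTranslate_X (a : σ → R) (i : σ) : mvTranslate a (X i) = X i + C (a i) :=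
  aeval_X _ i

theorem eval_mvTranslate (a x : σ → R) (p : MvPolynomial σ R) :
    eval x (mvTranslate a p) = eval (x + a) p := by
  induction p using MvPolynomial.induction_on with
  | C r => simp [mvTranslate]
  | add p q hp hq => simp only [map_add, hp, hq]
  | mul_X p i hp => simp only [map_mul, hp, mvTranslate_X, map_add, eval_X, eval_C, Pi.add_apply]

theorem pderiv_mvTranslate (a : σ → R) (i : σ) (p : MvPolynomial σ R) :
    pderiv i (mvTranslate a p) = mvTranslate a (pderiv i p) := by
  classical
  induction p using MvPolynomial.induction_on with
  | C r => simp [mvTranslate]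
  | add p q hp hq => simp only [map_add, hp, hq]
  | mul_X p j hp =>
    have hX : pderiv i (mvTranslate a (X j)) = mvTranslate a (pderiv i (X j)) := by
      rcases eq_or_ne j i with rfl | hij
      · simp [mvTranslate_X]
      · simp [mvTranslate_X, pderiv_X_of_ne hij]
    simp only [map_mul, Derivation.leibniz, smul_eq_mul, map_add, hp, hX]

theorem mvLaplacian_mvTranslate [Fintype σ] (a : σ → R) (p : MvPolynomial σ R) :
    mvLaplacian (mvTranslate a p) = mvTranslate a (mvLaplacian p) := by
  simp only [mvLaplacian_apply, pderiv_mvTranslate, map_sum]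

end Laplacian

section GaussianIntegrals

open MvPolynomial

theorem abs_pow_le_exp_mul_sq (m : ℕ) {ε : ℝ} (hε : 0 < ε) :
    ∃ C, ∀ t : ℝ, |t| ^ m ≤ C * Real.exp (ε * t ^ 2) := by
  refine ⟨m.factorial * Real.exp (1 / (4 * ε)), fun t => ?_⟩
  have habs : |t| ≤ 1 / (4 * ε) + ε * t ^ 2 := by
    have hsq : 1 / (4 * ε) + ε * t ^ 2 - |t| = (2 * ε * |t| - 1) ^ 2 / (4 * ε) := by
      rw [← sq_abs t]; field_simp; ring
    have : 0 ≤ (2 * ε * |t| - 1) ^ 2 / (4 * ε) := by positivity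
    linarith
  calc |t| ^ m ≤ m.factorial * Real.exp |t| :=
        (div_le_iff₀' (by positivity)).1 (Real.pow_div_factorial_le_exp _ (abs_nonneg t) m)
    _ ≤ m.factorial * Real.exp (1 / (4 * ε) + ε * t ^ 2) := by gcongr
    _ = m.factorial * Real.exp (1 / (4 * ε)) * Real.exp (ε * t ^ 2) := by
        rw [Real.exp_add, mul_assoc]

variable {ι : Type*}

theorem continuous_eval_ofLp (p : MvPolynomial ι ℝ) :
    Continuous fun x : EuclideanSpace ℝ ι => eval x.ofLp p :=
  p.continuous_eval.comp (PiLp.continuous_ofLp 2 _)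

theorem hasFDerivAt_eval_ofLp [Fintype ι] (p : MvPolynomial ι ℝ) (x : EuclideanSpace ℝ ι) :
    HasFDerivAt (fun x : EuclideanSpace ℝ ι => eval x.ofLp p)
      (∑ i, eval x.ofLp (pderiv i p) • (EuclideanSpace.proj i : EuclideanSpace ℝ ι →L[ℝ] ℝ)) x := by
  classical
  induction p using MvPolynomial.induction_on with
  | C a => simpa using hasFDerivAt_const a x
  | add p q hp hq => simpa [add_smul, Finset.sum_add_distrib] using hp.fun_add hq
  | mul_X p j hp =>
    simp only [map_mul, eval_X]
    have hproj := (EuclideanSpace.proj j : EuclideanSpace ℝ ι →L[ℝ] ℝ).hasFDerivAt (x := x)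
    refine (hp.fun_mul hproj).congr_fderiv (ContinuousLinearMap.ext fun y => ?_)
    simp [pderiv_X, Pi.single_apply, add_mul, Finset.sum_add_distrib, Finset.mul_sum,
      apply_ite, mul_assoc]

theorem fderiv_eval_ofLp_single [Finite ι] [DecidableEq ι] (p : MvPolynomial ι ℝ) (i : ι)
    (x : EuclideanSpace ℝ ι) :
    fderiv ℝ (fun x : EuclideanSpace ℝ ι => eval x.ofLp p) x (EuclideanSpace.single i 1) =
      eval x.ofLp (pderiv i p) := by
  have := Fintype.ofFinite ι
  rw [(hasFDerivAt_eval_ofLp p x).fderiv]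
  simp

variable [Fintype ι]

theorem exists_abs_eval_le_exp (p : MvPolynomial ι ℝ) {ε : ℝ} (hε : 0 < ε) :
    ∃ C, ∀ x : EuclideanSpace ℝ ι, |eval x.ofLp p| ≤ C * Real.exp (ε * ‖x‖ ^ 2) := by
  choose C hC using fun m => abs_pow_le_exp_mul_sq m hε
  refine ⟨∑ d ∈ p.support, |coeff d p| * C d.degree, fun x => ?_⟩
  have hmon (d : ι →₀ ℕ) : |∏ i, x i ^ d i| ≤ C d.degree * Real.exp (ε * ‖x‖ ^ 2) := by
    calc |∏ i, x i ^ d i| ≤ ∏ i, ‖x‖ ^ d i := by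
          rw [Finset.abs_prod]
          gcongr with i
          rw [abs_pow]
          gcongr
          exact PiLp.norm_apply_le x i
      _ = |‖x‖| ^ d.degree := by
          rw [Finset.prod_pow_eq_pow_sum, Finsupp.degree_eq_sum, abs_norm]
      _ ≤ C d.degree * Real.exp (ε * ‖x‖ ^ 2) := hC _ _
  rw [eval_eq', Finset.sum_mul]
  refine (Finset.abs_sum_le_sum_abs _ _).trans (Finset.sum_le_sum fun d _ => ?_)
  rw [abs_mul, mul_assoc]
  gcongr
  exact hmon d

theorem integrable_exp_neg_mul_norm_sq {c : ℝ} (hc : 0 < c) :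
    Integrable fun x : EuclideanSpace ℝ ι => Real.exp (-c * ‖x‖ ^ 2) := by
  refine .of_integral_ne_zero ?_
  rw [GaussianFourier.integral_rexp_neg_mul_sq_norm hc]
  positivity

theorem integrable_eval_mul_exp_neg_mul_norm_sq (p : MvPolynomial ι ℝ) {c : ℝ} (hc : 0 < c) :
    Integrable fun x : EuclideanSpace ℝ ι => eval x.ofLp p * Real.exp (-c * ‖x‖ ^ 2) := by
  obtain ⟨C, hC⟩ := exists_abs_eval_le_exp p (half_pos hc)
  have := continuous_eval_ofLp p
  refine ((integrable_exp_neg_mul_norm_sq (half_pos hc)).const_mul C).mono' (by fun_prop)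
    (.of_forall fun x => ?_)
  rw [norm_mul, Real.norm_eq_abs, Real.norm_of_nonneg (Real.exp_nonneg _)]
  calc |eval x.ofLp p| * Real.exp (-c * ‖x‖ ^ 2)
      ≤ C * Real.exp (c / 2 * ‖x‖ ^ 2) * Real.exp (-c * ‖x‖ ^ 2) := by gcongr; exact hC x
    _ = C * Real.exp (-(c / 2) * ‖x‖ ^ 2) := by rw [mul_assoc, ← Real.exp_add]; ring_nf

theorem integral_eval_X_mul_mul_exp_neg_mul_norm_sq (p : MvPolynomial ι ℝ) (i : ι) {c : ℝ}
    (hc : 0 < c) :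
    ∫ x : EuclideanSpace ℝ ι, eval x.ofLp (X i * p) * Real.exp (-c * ‖x‖ ^ 2) =
      (2 * c)⁻¹ * ∫ x : EuclideanSpace ℝ ι, eval x.ofLp (pderiv i p) * Real.exp (-c * ‖x‖ ^ 2) := by
  classical
  have hgauss (x : EuclideanSpace ℝ ι) : HasFDerivAt (fun x => Real.exp (-c * ‖x‖ ^ 2))
      (Real.exp (-c * ‖x‖ ^ 2) • (-c) • 2 • innerSL ℝ x) x := by
    simpa using ((hasStrictFDerivAt_norm_sq x).hasFDerivAt.const_mul (-c)).exp
  have hgauss' (x : EuclideanSpace ℝ ι) : eval x.ofLp p * fderiv ℝ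
      (fun x : EuclideanSpace ℝ ι => Real.exp (-c * ‖x‖ ^ 2)) x (EuclideanSpace.single i 1) =
      -(2 * c) * (eval x.ofLp (X i * p) * Real.exp (-c * ‖x‖ ^ 2)) := by
    rw [(hgauss x).fderiv]
    simp only [neg_mul, neg_smul, smul_neg, neg_apply, smul_apply, coe_innerSL_apply,
      EuclideanSpace.inner_single_right, Real.ringHom_apply, one_mul, nsmul_eq_mul,
      Nat.cast_ofNat, smul_eq_mul, mul_neg, map_mul, eval_X, neg_inj]
    ring
  have hparts := integral_mul_fderiv_eq_neg_fderiv_mul_of_integrable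
    (f := fun x : EuclideanSpace ℝ ι => eval x.ofLp p) (v := EuclideanSpace.single i 1)
    (g := fun x => Real.exp (-c * ‖x‖ ^ 2)) (μ := volume)
    (by simpa only [fderiv_eval_ofLp_single] using integrable_eval_mul_exp_neg_mul_norm_sq _ hc)
    (by simpa only [hgauss'] using (integrable_eval_mul_exp_neg_mul_norm_sq _ hc).const_mul _)
    (integrable_eval_mul_exp_neg_mul_norm_sq p hc)
    (fun x _ => (hasFDerivAt_eval_ofLp p x).differentiableAt)
    (fun x _ => (hgauss x).differentiableAt)
  simp only [hgauss', fderiv_eval_ofLp_single, integral_const_mul] at hparts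
  rw [eq_inv_mul_iff_mul_eq₀ (by positivity)]
  linarith

theorem natCast_mul_integral_eval_mul_exp_neg_mul_norm_sq {p : MvPolynomial ι ℝ} {m : ℕ}
    (hp : p.IsHomogeneous m) {c : ℝ} (hc : 0 < c) :
    m * ∫ x : EuclideanSpace ℝ ι, eval x.ofLp p * Real.exp (-c * ‖x‖ ^ 2) =
      (2 * c)⁻¹ * ∫ x : EuclideanSpace ℝ ι, eval x.ofLp (mvLaplacian p) *
        Real.exp (-c * ‖x‖ ^ 2) := by
  have hsum (q : ι → MvPolynomial ι ℝ) :
      ∫ x : EuclideanSpace ℝ ι, eval x.ofLp (∑ i, q i) * Real.exp (-c * ‖x‖ ^ 2) =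
        ∑ i, ∫ x : EuclideanSpace ℝ ι, eval x.ofLp (q i) * Real.exp (-c * ‖x‖ ^ 2) := by
    simp only [map_sum, Finset.sum_mul]
    exact integral_finsetSum _ fun i _ => integrable_eval_mul_exp_neg_mul_norm_sq (q i) hc
  calc m * ∫ x : EuclideanSpace ℝ ι, eval x.ofLp p * Real.exp (-c * ‖x‖ ^ 2)
      = ∫ x : EuclideanSpace ℝ ι, eval x.ofLp (∑ i, X i * pderiv i p) *
          Real.exp (-c * ‖x‖ ^ 2) := by
        rw [hp.sum_X_mul_pderiv, ← integral_const_mul]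
        simp [mul_assoc]
    _ = ∑ i, (2 * c)⁻¹ * ∫ x : EuclideanSpace ℝ ι, eval x.ofLp (pderiv i (pderiv i p)) *
          Real.exp (-c * ‖x‖ ^ 2) := by
        simp only [hsum, integral_eval_X_mul_mul_exp_neg_mul_norm_sq _ _ hc]
    _ = _ := by rw [← Finset.mul_sum, ← hsum, mvLaplacian_apply]

theorem integral_eval_mul_exp_neg_mul_norm_sq_of_mvLaplacian_eq_zero {p : MvPolynomial ι ℝ}
    (hp : mvLaplacian p = 0) {c : ℝ} (hc : 0 < c) :
    ∫ x : EuclideanSpace ℝ ι, eval x.ofLp p * Real.exp (-c * ‖x‖ ^ 2) =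
      (Real.pi / c) ^ (Fintype.card ι / 2 : ℝ) * coeff 0 p := by
  have hpos (m : ℕ) : ∫ x : EuclideanSpace ℝ ι,
      eval x.ofLp (homogeneousComponent (m + 1) p) * Real.exp (-c * ‖x‖ ^ 2) = 0 := by
    have := natCast_mul_integral_eval_mul_exp_neg_mul_norm_sq
      (homogeneousComponent_isHomogeneous (m + 1) p) hc
    simpa [mvLaplacian_homogeneousComponent_eq_zero hp, Nat.cast_add_one_ne_zero] using this
  conv_lhs => rw [← sum_homogeneousComponent p]
  simp only [map_sum, Finset.sum_mul]
  rw [integral_finsetSum _ fun m _ => integrable_eval_mul_exp_neg_mul_norm_sq _ hc,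
    Finset.sum_range_succ']
  simp only [hpos, Finset.sum_const_zero, zero_add, homogeneousComponent_zero, eval_C,
    integral_const_mul, GaussianFourier.integral_rexp_neg_mul_sq_norm hc, finrank_euclideanSpace]
  exact mul_comm _ _

theorem integral_eval_mul_exp_neg_mul_norm_sub_sq {p : MvPolynomial ι ℝ}
    (hp : mvLaplacian p = 0) (a : EuclideanSpace ℝ ι) {c : ℝ} (hc : 0 < c) :
    ∫ x : EuclideanSpace ℝ ι, eval x.ofLp p * Real.exp (-c * ‖x - a‖ ^ 2) =
      (Real.pi / c) ^ (Fintype.card ι / 2 : ℝ) * eval a.ofLp p := by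
  have htr : mvLaplacian (mvTranslate a.ofLp p) = 0 := by
    rw [mvLaplacian_mvTranslate, hp, map_zero]
  have hcoeff : coeff 0 (mvTranslate a.ofLp p) = eval a.ofLp p := by
    rw [← constantCoeff_eq, ← eval_zero, eval_mvTranslate, zero_add]
  rw [← integral_add_right_eq_self _ a, ← hcoeff,
    ← integral_eval_mul_exp_neg_mul_norm_sq_of_mvLaplacian_eq_zero htr hc]
  simp only [eval_mvTranslate, WithLp.ofLp_add, add_sub_cancel_right]

end GaussianIntegrals

namespace IsHarmonicHomogeneous

open MvPolynomial

variable {n s : ℕ} {f : EuclideanSpace ℝ (Fin n) → ℝ}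

theorem exists_eq_eval (hf : IsHarmonicHomogeneous n s f) :
    ∃ p : MvPolynomial (Fin n) ℝ, mvLaplacian p = 0 ∧ f = fun x => eval x.ofLp p := by
  obtain ⟨⟨p, hfp⟩, -, hharm⟩ := hf
  obtain rfl : f = fun x => eval x.ofLp p := funext hfp
  refine ⟨p, MvPolynomial.funext fun x => ?_, rfl⟩
  rw [map_zero, ← hharm (WithLp.toLp 2 x), mvLaplacian_apply, map_sum]
  simp only [secondPartialDeriv, fderiv_eval_ofLp_single]

theorem continuous (hf : IsHarmonicHomogeneous n s f) : Continuous f := by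
  obtain ⟨p, -, rfl⟩ := hf.exists_eq_eval
  exact continuous_eval_ofLp p

theorem exists_abs_le_exp (hf : IsHarmonicHomogeneous n s f) {ε : ℝ} (hε : 0 < ε) :
    ∃ C, ∀ x, |f x| ≤ C * Real.exp (ε * ‖x‖ ^ 2) := by
  obtain ⟨p, -, rfl⟩ := hf.exists_eq_eval
  exact exists_abs_eval_le_exp p hε

theorem integrable_mul_exp_neg_mul_norm_sq (hf : IsHarmonicHomogeneous n s f) {c : ℝ}
    (hc : 0 < c) :
    Integrable fun x => f x * Real.exp (-c * ‖x‖ ^ 2) := by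
  obtain ⟨p, -, rfl⟩ := hf.exists_eq_eval
  exact integrable_eval_mul_exp_neg_mul_norm_sq p hc

-- `t ↦ f (t • x)` is a polynomial, so homogeneity for `t > 0` propagates to every real `t`.
theorem map_smul (hf : IsHarmonicHomogeneous n s f) (t : ℝ) (x : EuclideanSpace ℝ (Fin n)) :
    f (t • x) = t ^ s * f x := by
  obtain ⟨p, -, hp⟩ := hf.exists_eq_eval
  set P : Polynomial ℝ := aeval (fun i => Polynomial.C (x i) * Polynomial.X) p
  have hP (t : ℝ) : P.eval t = f (t • x) := by
    rw [hp, ← Polynomial.coe_aeval_eq_eval, comp_aeval_apply, aeval_eq_eval]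
    congr! 2
    ext i
    simp [mul_comm t]
  have hPs : P = Polynomial.C (f x) * Polynomial.X ^ s := by
    refine Polynomial.eq_of_infinite_eval_eq _ _ ((Set.Ioi_infinite 0).mono fun t ht => ?_)
    simp [hP, hf.2.1 t ht, mul_comm (f x)]
  rw [← hP, hPs]
  simp [mul_comm (f x)]

theorem integral_mul_exp_neg_mul_norm_sub_sq (hf : IsHarmonicHomogeneous n s f)
    (a : EuclideanSpace ℝ (Fin n)) {c : ℝ} (hc : 0 < c) :
    ∫ x, f x * Real.exp (-c * ‖x - a‖ ^ 2) = (Real.pi / c) ^ (n / 2 : ℝ) * f a := by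
  obtain ⟨p, hp, rfl⟩ := hf.exists_eq_eval
  simpa using integral_eval_mul_exp_neg_mul_norm_sub_sq hp a hc

end IsHarmonicHomogeneous

theorem isHarmonicHomogeneous_one (n : ℕ) : IsHarmonicHomogeneous n 0 1 :=
  ⟨⟨1, by simp⟩, by simp, by simp [secondPartialDeriv, Pi.one_def]⟩

theorem integrable_uncurry_of_nonneg {α β : Type*} [MeasurableSpace α] [MeasurableSpace β]
    {μ : Measure α} {ν : Measure β} [SFinite ν] {F : α → β → ℝ}
    (hF : Measurable (Function.uncurry F)) (hpos : ∀ᵐ x ∂μ, ∀ᵐ y ∂ν, 0 ≤ F x y)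
    (hsec : ∀ᵐ x ∂μ, Integrable (F x) ν) (hint : Integrable (fun x => ∫ y, F x y ∂ν) μ) :
    Integrable (Function.uncurry F) (μ.prod ν) := by
  refine (integrable_prod_iff hF.aestronglyMeasurable).2 ⟨hsec, hint.congr ?_⟩
  filter_upwards [hpos] with x hx
  refine integral_congr_ae ?_
  filter_upwards [hx] with y hy
  exact (Real.norm_of_nonneg hy).symm

section OneVariable

theorem integral_exp_neg_mul_sq_add_mul {b : ℝ} (hb : 0 < b) (w : ℝ) :
    ∫ z, Real.exp (-b * z ^ 2 + w * z) = √(Real.pi / b) * Real.exp (w ^ 2 / (4 * b)) := by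
  have hsq (z : ℝ) : Real.exp (-b * z ^ 2 + w * z) =
      Real.exp (-b * (z - w / (2 * b)) ^ 2) * Real.exp (w ^ 2 / (4 * b)) := by
    rw [← Real.exp_add]
    congr 1
    field_simp
    ring
  simp only [hsq]
  rw [integral_mul_const, integral_sub_right_eq_self (fun z => Real.exp (-b * z ^ 2)),
    integral_gaussian]

theorem integrable_exp_neg_mul_sq_add_mul {b : ℝ} (hb : 0 < b) (w : ℝ) :
    Integrable fun z => Real.exp (-b * z ^ 2 + w * z) := by
  refine .of_integral_ne_zero ?_
  rw [integral_exp_neg_mul_sq_add_mul hb]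
  positivity

theorem integral_pow_mul_exp_neg_mul_sq_of_even {s : ℕ} (hs : Even s) {b : ℝ} (hb : 0 < b) :
    ∫ z : ℝ, z ^ s * Real.exp (-b * z ^ 2) =
      Real.Gamma ((s + 1) / 2) * b ^ (-((s + 1) / 2) : ℝ) := by
  have habs := integral_comp_abs (f := fun z : ℝ => z ^ s * Real.exp (-b * z ^ 2))
  simp only [hs.pow_abs, sq_abs] at habs
  have hhalf := integral_rpow_mul_exp_neg_mul_rpow (p := 2) (q := s) two_pos
    (by linarith [s.cast_nonneg (α := ℝ)]) hb
  simp only [Real.rpow_natCast, Real.rpow_ofNat] at hhalf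
  rw [habs, hhalf]
  ring_nf

theorem integral_rpow_mul_exp_neg_mul_sq_Ioi {p : ℝ} (hp : 0 < p) :
    ∫ r in Set.Ioi (0 : ℝ), r ^ (p - 1) * Real.exp (-r ^ 2) = Real.Gamma (p / 2) / 2 := by
  have := integral_rpow_mul_exp_neg_mul_rpow (p := 2) (q := p - 1) two_pos (by linarith) one_pos
  simpa [div_eq_inv_mul] using this

-- At `d = 0` the integral diverges, so both sides are the junk value `0`.
theorem integral_rpow_mul_exp_neg_mul_Ioi_of_nonneg {a d : ℝ} (ha : 0 < a) (hd : 0 ≤ d) :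
    ∫ l in Set.Ioi (0 : ℝ), l ^ (a - 1) * Real.exp (-(d * l)) = Real.Gamma a * d ^ (-a) := by
  rcases hd.eq_or_lt with rfl | hd
  · simp [Real.zero_rpow (neg_ne_zero.2 ha.ne'),
      integral_undef (not_integrableOn_Ioi_rpow (a - 1))]
  · rw [Real.integral_rpow_mul_exp_neg_mul_Ioi ha hd, one_div, Real.inv_rpow hd.le,
      ← Real.rpow_neg hd.le, mul_comm]

theorem integrableOn_rpow_mul_exp_neg_mul_Ioi {a d : ℝ} (ha : 0 < a) (hd : 0 < d) :
    IntegrableOn (fun l => l ^ (a - 1) * Real.exp (-(d * l))) (Set.Ioi 0) := by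
  refine .of_integral_ne_zero ?_
  rw [integral_rpow_mul_exp_neg_mul_Ioi_of_nonneg ha hd.le]
  have := Real.Gamma_pos_of_pos ha
  positivity

theorem setIntegral_Ioi_rpow_mul_exp_mul_rpow_mul_exp {p w : ℝ} (hp : 0 < p) (hw : 0 < w)
    (q c : ℝ) :
    ∫ l in Set.Ioi (0 : ℝ), w ^ (p + q - 1) * Real.exp (-(c * w)) *
        (l ^ (p - 1) * Real.exp (-(w * l))) =
      Real.Gamma p * (w ^ (q - 1) * Real.exp (-(c * w))) := by
  rw [integral_const_mul, integral_rpow_mul_exp_neg_mul_Ioi_of_nonneg hp hw.le,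
    show q - 1 = p + q - 1 + -p by ring, Real.rpow_add hw]
  ring

theorem integrable_rpow_mul_exp_mul_rpow_mul_exp {p q c : ℝ} (hp : 0 < p) (hq : 0 < q)
    (hc : 0 < c) :
    Integrable (Function.uncurry fun w l : ℝ =>
      w ^ (p + q - 1) * Real.exp (-(c * w)) * (l ^ (p - 1) * Real.exp (-(w * l))))
      ((volume.restrict (Set.Ioi 0)).prod (volume.restrict (Set.Ioi 0))) := by
  have hmem : ∀ᵐ w ∂(volume.restrict (Set.Ioi (0 : ℝ))), 0 < w :=
    ae_restrict_mem measurableSet_Ioi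
  refine integrable_uncurry_of_nonneg (by fun_prop) ?_ ?_ ?_
  · filter_upwards [hmem] with w hw
    filter_upwards [hmem] with l hl
    positivity
  · filter_upwards [hmem] with w hw
    exact (integrableOn_rpow_mul_exp_neg_mul_Ioi hp hw).const_mul _
  · refine ((integrableOn_rpow_mul_exp_neg_mul_Ioi hq hc).const_mul (Real.Gamma p)).congr ?_
    filter_upwards [hmem] with w hw
    exact (setIntegral_Ioi_rpow_mul_exp_mul_rpow_mul_exp hp hw q c).symm

theorem integral_rpow_mul_add_rpow_neg_Ioi {p q c : ℝ} (hp : 0 < p) (hq : 0 < q) (hc : 0 < c) :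
    ∫ l in Set.Ioi (0 : ℝ), l ^ (p - 1) * (c + l) ^ (-(p + q)) =
      Real.Gamma p * Real.Gamma q / Real.Gamma (p + q) * c ^ (-q) := by
  have hΓ := (Real.Gamma_pos_of_pos (add_pos hp hq)).ne'
  have hdw {l : ℝ} (hl : 0 < l) : ∫ w in Set.Ioi (0 : ℝ), w ^ (p + q - 1) * Real.exp (-(c * w)) *
      (l ^ (p - 1) * Real.exp (-(w * l))) =
        Real.Gamma (p + q) * (l ^ (p - 1) * (c + l) ^ (-(p + q))) := by
    have hexp (w : ℝ) : w ^ (p + q - 1) * Real.exp (-(c * w)) *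
        (l ^ (p - 1) * Real.exp (-(w * l))) =
          l ^ (p - 1) * (w ^ (p + q - 1) * Real.exp (-((c + l) * w))) := by
      rw [show -((c + l) * w) = -(c * w) + -(w * l) by ring, Real.exp_add]
      ring
    simp only [hexp]
    rw [integral_const_mul, integral_rpow_mul_exp_neg_mul_Ioi_of_nonneg (by positivity)
      (by positivity)]
    ring
  have hswap := integral_integral_swap (integrable_rpow_mul_exp_mul_rpow_mul_exp hp hq hc)
  rw [setIntegral_congr_fun measurableSet_Ioi fun w hw =>
      setIntegral_Ioi_rpow_mul_exp_mul_rpow_mul_exp hp hw q c,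
    setIntegral_congr_fun measurableSet_Ioi fun l hl => hdw hl, integral_const_mul,
    integral_const_mul, integral_rpow_mul_exp_neg_mul_Ioi_of_nonneg hq hc.le] at hswap
  field_simp
  linarith

theorem integrableOn_rpow_mul_add_rpow_neg_Ioi {p q c : ℝ} (hp : 0 < p) (hq : 0 < q)
    (hc : 0 < c) : IntegrableOn (fun l => l ^ (p - 1) * (c + l) ^ (-(p + q))) (Set.Ioi 0) := by
  refine .of_integral_ne_zero ?_
  rw [integral_rpow_mul_add_rpow_neg_Ioi hp hq hc]
  have := Real.Gamma_pos_of_pos hp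
  have := Real.Gamma_pos_of_pos hq
  have := Real.Gamma_pos_of_pos (add_pos hp hq)
  positivity

end OneVariable

section AnisotropicGaussian

variable {n s : ℕ} {f : EuclideanSpace ℝ (Fin n) → ℝ} {v : EuclideanSpace ℝ (Fin n)}

theorem real_inner_sq_le_norm_sq {E : Type*} [SeminormedAddCommGroup E] [InnerProductSpace ℝ E]
    (x : E) {v : E} (hv : ‖v‖ = 1) : ⟪x, v⟫ ^ 2 ≤ ‖x‖ ^ 2 := by
  simpa [hv] using sq_le_sq.2 ((abs_real_inner_le_norm x v).trans (le_abs_self _))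

theorem exp_neg_mul_norm_sq_mul_exp_neg_mul_sq_add {E : Type*} [SeminormedAddCommGroup E]
    [InnerProductSpace ℝ E] (x : E) {v : E} (hv : ‖v‖ = 1) {b l : ℝ} (hb : b ≠ 0) (hl : l ≠ 0)
    (z : ℝ) :
    Real.exp (-b * ‖x‖ ^ 2) * Real.exp (-(b ^ 2 / l) * z ^ 2 + 2 * b * ⟪x, v⟫ * z) =
      Real.exp (-(b * (b - l) / l) * z ^ 2) * Real.exp (-b * ‖x - z • v‖ ^ 2) := by
  rw [← Real.exp_add, ← Real.exp_add, norm_sub_sq_real, norm_smul, hv, real_inner_smul_right,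
    mul_one, Real.norm_eq_abs, sq_abs]
  congr 1
  field_simp
  ring

theorem IsHarmonicHomogeneous.integrable_mul_exp_anisotropic (hf : IsHarmonicHomogeneous n s f)
    (hv : ‖v‖ = 1) {c l : ℝ} (hc : 0 < c) (hl : 0 ≤ l) :
    Integrable fun x => f x * Real.exp (-(c + l) * ‖x‖ ^ 2 + l * ⟪x, v⟫ ^ 2) := by
  have := hf.continuous
  refine (hf.integrable_mul_exp_neg_mul_norm_sq hc).mono (by fun_prop) (.of_forall fun x => ?_)
  rw [norm_mul, norm_mul, Real.norm_of_nonneg (Real.exp_nonneg _),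
    Real.norm_of_nonneg (Real.exp_nonneg _)]
  gcongr
  nlinarith [real_inner_sq_le_norm_sq x hv]

theorem integral_exp_neg_sq_div_mul_sq_add {b l : ℝ} (hb : 0 < b) (hl : 0 < l) (t : ℝ) :
    ∫ z, Real.exp (-(b ^ 2 / l) * z ^ 2 + 2 * b * t * z) =
      √(Real.pi / (b ^ 2 / l)) * Real.exp (l * t ^ 2) := by
  rw [integral_exp_neg_mul_sq_add_mul (by positivity)]
  congr 2
  field_simp
  ring

theorem IsHarmonicHomogeneous.integrable_mul_exp_mul_exp_neg_mul_sq_add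
    (hf : IsHarmonicHomogeneous n s f) (hv : ‖v‖ = 1) {c l : ℝ} (hc : 0 < c) (hl : 0 < l) :
    Integrable (Function.uncurry fun (x : EuclideanSpace ℝ (Fin n)) (z : ℝ) =>
      f x * Real.exp (-(c + l) * ‖x‖ ^ 2) *
        Real.exp (-((c + l) ^ 2 / l) * z ^ 2 + 2 * (c + l) * ⟪x, v⟫ * z)) := by
  have := hf.continuous
  refine (integrable_prod_iff (Continuous.aestronglyMeasurable (by fun_prop))).2
    ⟨.of_forall fun x =>
      (integrable_exp_neg_mul_sq_add_mul (b := (c + l) ^ 2 / l) (by positivity)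
        (2 * (c + l) * ⟪x, v⟫)).const_mul (f x * Real.exp (-(c + l) * ‖x‖ ^ 2)), ?_⟩
  refine ((hf.integrable_mul_exp_anisotropic hv hc hl.le).norm.mul_const
    √(Real.pi / ((c + l) ^ 2 / l))).congr (.of_forall fun x => ?_)
  simp only [Function.uncurry, norm_mul, Real.norm_of_nonneg (Real.exp_nonneg _)]
  rw [integral_const_mul, integral_exp_neg_sq_div_mul_sq_add (by positivity) hl, Real.exp_add]
  ring

theorem rpow_mul_rpow_div_sqrt_eq {b c l : ℝ} (hb : 0 < b) (hc : 0 < c) (hl : 0 < l) (m t : ℝ) :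
    (Real.pi / b) ^ (m / 2) * (b * c / l) ^ (-((t + 1) / 2)) / √(Real.pi / (b ^ 2 / l)) =
      Real.pi ^ ((m - 1) / 2) * c ^ (-((t + 1) / 2)) *
        (l ^ (t / 2) * b ^ (-((m - 1 + t) / 2))) := by
  have hπ := Real.pi_pos
  have hbcl : 0 < b * c / l := by positivity
  have hπb : 0 < Real.pi / b := by positivity
  have hπbl : 0 < Real.pi / (b ^ 2 / l) := by positivity
  rw [Real.sqrt_eq_rpow, div_eq_mul_inv _ ((_ : ℝ) ^ (1 / 2 : ℝ)), ← Real.rpow_neg hπbl.le]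
  simp only [Real.rpow_def_of_pos, hb, hc, hl, hπ, hbcl, hπb, hπbl, ← Real.exp_add]
  rw [Real.log_div hπ.ne' hb.ne', Real.log_div hπ.ne' (by positivity),
    Real.log_div (by positivity) hl.ne', Real.log_div (by positivity) hl.ne',
    Real.log_mul hb.ne' hc.ne', Real.log_pow]
  push_cast
  ring_nf

theorem IsHarmonicHomogeneous.integral_mul_exp_anisotropic (hf : IsHarmonicHomogeneous n s f)
    (hs : Even s) (hv : ‖v‖ = 1) {c l : ℝ} (hc : 0 < c) (hl : 0 < l) :
    ∫ x, f x * Real.exp (-(c + l) * ‖x‖ ^ 2 + l * ⟪x, v⟫ ^ 2) =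
      Real.pi ^ (((n : ℝ) - 1) / 2) * c ^ (-((s + 1) / 2) : ℝ) *
        (l ^ (s / 2 : ℝ) * (c + l) ^ (-((n - 1 + s) / 2) : ℝ)) *
          (Real.Gamma ((s + 1) / 2) * f v) := by
  set b := c + l with hb
  have hb0 : 0 < b := by positivity
  have hdz (x : EuclideanSpace ℝ (Fin n)) : ∫ z : ℝ, f x * Real.exp (-b * ‖x‖ ^ 2) *
        Real.exp (-(b ^ 2 / l) * z ^ 2 + 2 * b * ⟪x, v⟫ * z) =
      f x * Real.exp (-b * ‖x‖ ^ 2 + l * ⟪x, v⟫ ^ 2) * √(Real.pi / (b ^ 2 / l)) := by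
    rw [integral_const_mul, integral_exp_neg_sq_div_mul_sq_add hb0 hl, Real.exp_add]
    ring
  have hdx (z : ℝ) : ∫ x, f x * Real.exp (-b * ‖x‖ ^ 2) *
        Real.exp (-(b ^ 2 / l) * z ^ 2 + 2 * b * ⟪x, v⟫ * z) =
      (Real.pi / b) ^ (n / 2 : ℝ) * f v * (z ^ s * Real.exp (-(b * c / l) * z ^ 2)) := by
    simp only [mul_assoc (f _), exp_neg_mul_norm_sq_mul_exp_neg_mul_sq_add _ hv hb0.ne' hl.ne',
      mul_left_comm (f _), integral_const_mul]
    rw [hf.integral_mul_exp_neg_mul_norm_sub_sq _ hb0, hf.map_smul,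
      show b - l = c by rw [hb, add_sub_cancel_right]]
    ring
  have hswap := integral_integral_swap (hf.integrable_mul_exp_mul_exp_neg_mul_sq_add hv hc hl)
  simp only [← hb, hdz, hdx] at hswap
  rw [integral_mul_const, integral_const_mul,
    integral_pow_mul_exp_neg_mul_sq_of_even hs (by positivity)] at hswap
  rw [← rpow_mul_rpow_div_sqrt_eq hb0 hc hl, eq_div_of_mul_eq (by positivity) hswap]
  ring

theorem integrable_rpow_mul_exp_anisotropic (hv : ‖v‖ = 1) {a c : ℝ} (ha : 0 < a)
    (han : a < (n - 1) / 2) (hc : 0 < c) :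
    Integrable (Function.uncurry fun (l : ℝ) (x : EuclideanSpace ℝ (Fin n)) =>
      l ^ (a - 1) * Real.exp (-(c + l) * ‖x‖ ^ 2 + l * ⟪x, v⟫ ^ 2))
      ((volume.restrict (Set.Ioi 0)).prod volume) := by
  have hmem : ∀ᵐ l ∂(volume.restrict (Set.Ioi (0 : ℝ))), 0 < l :=
    ae_restrict_mem measurableSet_Ioi
  have hbeta := integrableOn_rpow_mul_add_rpow_neg_Ioi ha (sub_pos.2 han) hc
  have hone := isHarmonicHomogeneous_one n
  refine integrable_uncurry_of_nonneg (by fun_prop) ?_ ?_ ?_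
  · filter_upwards [hmem] with l hl
    exact .of_forall fun x => by positivity
  · filter_upwards [hmem] with l hl
    have := hone.integrable_mul_exp_anisotropic hv hc hl.le
    simp only [Pi.one_apply, one_mul] at this
    exact this.const_mul _
  · refine (hbeta.const_mul (Real.pi ^ (((n : ℝ) - 1) / 2) * c ^ (-((0 + 1) / 2) : ℝ) *
      Real.Gamma ((0 + 1) / 2))).congr ?_
    filter_upwards [hmem] with l hl
    have := hone.integral_mul_exp_anisotropic .zero hv hc hl
    simp only [Pi.one_apply, one_mul, mul_one, Nat.cast_zero, zero_div, Real.rpow_zero] at this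
    rw [integral_const_mul, this, add_sub_cancel, add_zero]
    ring

theorem IsHarmonicHomogeneous.integrable_mul_rpow_mul_exp_anisotropic
    (hf : IsHarmonicHomogeneous n s f) (hv : ‖v‖ = 1) {a c : ℝ} (ha : 0 < a)
    (han : a < (n - 1) / 2) (hc : 0 < c) :
    Integrable (Function.uncurry fun (l : ℝ) (x : EuclideanSpace ℝ (Fin n)) =>
      f x * (l ^ (a - 1) * Real.exp (-(c + l) * ‖x‖ ^ 2 + l * ⟪x, v⟫ ^ 2)))
      ((volume.restrict (Set.Ioi 0)).prod volume) := by
  obtain ⟨C, hC⟩ := hf.exists_abs_le_exp (half_pos hc)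
  have := hf.continuous
  have hbdd (x : EuclideanSpace ℝ (Fin n)) : ‖f x * Real.exp (-(c / 2) * ‖x‖ ^ 2)‖ ≤ C := by
    rw [norm_mul, Real.norm_eq_abs, Real.norm_of_nonneg (Real.exp_nonneg _), neg_mul, Real.exp_neg]
    exact mul_inv_le_of_le_mul₀ (Real.exp_nonneg _)
      (by have := (abs_nonneg _).trans (hC 0); simpa using this) (hC x)
  have hmul := (integrable_rpow_mul_exp_anisotropic hv ha han (half_pos hc)).bdd_mul
    (f := fun z : ℝ × EuclideanSpace ℝ (Fin n) => f z.2 * Real.exp (-(c / 2) * ‖z.2‖ ^ 2))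
    (Continuous.aestronglyMeasurable (by fun_prop)) (.of_forall fun z => hbdd z.2)
  refine hmul.congr (.of_forall fun ⟨l, x⟩ => ?_)
  have hexp : Real.exp (-(c + l) * ‖x‖ ^ 2 + l * ⟪x, v⟫ ^ 2) = Real.exp (-(c / 2) * ‖x‖ ^ 2) *
      Real.exp (-(c / 2 + l) * ‖x‖ ^ 2 + l * ⟪x, v⟫ ^ 2) := by
    rw [← Real.exp_add]
    ring_nf
  simp only [Function.uncurry, hexp]
  ring

theorem setIntegral_Ioi_mul_rpow_mul_exp_anisotropic (x : EuclideanSpace ℝ (Fin n)) (hv : ‖v‖ = 1)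
    {a : ℝ} (ha : 0 < a) (c y : ℝ) :
    ∫ l in Set.Ioi (0 : ℝ), y *
        (l ^ (a - 1) * Real.exp (-(c + l) * ‖x‖ ^ 2 + l * ⟪x, v⟫ ^ 2)) =
      Real.Gamma a * (y * ((‖x‖ ^ 2 - ⟪x, v⟫ ^ 2) ^ (-a) * Real.exp (-c * ‖x‖ ^ 2))) := by
  have hexp (l : ℝ) : Real.exp (-(c + l) * ‖x‖ ^ 2 + l * ⟪x, v⟫ ^ 2) =
      Real.exp (-((‖x‖ ^ 2 - ⟪x, v⟫ ^ 2) * l)) * Real.exp (-c * ‖x‖ ^ 2) := by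
    rw [← Real.exp_add]
    ring_nf
  simp only [hexp, ← mul_assoc (_ ^ (a - 1))]
  rw [integral_const_mul, integral_mul_const, integral_rpow_mul_exp_neg_mul_Ioi_of_nonneg ha
    (sub_nonneg.2 (real_inner_sq_le_norm_sq x hv))]
  ring

theorem IsHarmonicHomogeneous.integrable_mul_norm_sq_sub_inner_sq_rpow_neg
    (hf : IsHarmonicHomogeneous n s f) (hv : ‖v‖ = 1) {a c : ℝ} (ha : 0 < a)
    (han : a < (n - 1) / 2) (hc : 0 < c) :
    Integrable fun x => f x * ((‖x‖ ^ 2 - ⟪x, v⟫ ^ 2) ^ (-a) * Real.exp (-c * ‖x‖ ^ 2)) := by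
  have hint := (hf.integrable_mul_rpow_mul_exp_anisotropic hv ha han hc).integral_prod_right
  simp only [Function.uncurry, setIntegral_Ioi_mul_rpow_mul_exp_anisotropic _ hv ha] at hint
  exact (integrable_const_mul_iff (Real.Gamma_pos_of_pos ha).ne'.isUnit _).1 hint

theorem IsHarmonicHomogeneous.integral_mul_norm_sq_sub_inner_sq_rpow_neg
    (hf : IsHarmonicHomogeneous n s f) (hs : Even s) (hv : ‖v‖ = 1) {a : ℝ} (ha : 0 < a)
    (han : a < (n - 1) / 2) :
    ∫ x, f x * ((‖x‖ ^ 2 - ⟪x, v⟫ ^ 2) ^ (-a) * Real.exp (-1 * ‖x‖ ^ 2)) =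
      Real.pi ^ (((n : ℝ) - 1) / 2) * Real.Gamma ((s + 1) / 2) * Real.Gamma (a + s / 2) *
        Real.Gamma ((n - 1) / 2 - a) / (Real.Gamma a * Real.Gamma ((n - 1 + s) / 2)) * f v := by
  have hdx {l : ℝ} (hl : l ∈ Set.Ioi 0) :
      ∫ x, f x * (l ^ (a - 1) * Real.exp (-(1 + l) * ‖x‖ ^ 2 + l * ⟪x, v⟫ ^ 2)) =
        Real.pi ^ (((n : ℝ) - 1) / 2) * (Real.Gamma ((s + 1) / 2) * f v) *
          (l ^ (a + s / 2 - 1) * (1 + l) ^ (-(a + s / 2 + ((n - 1) / 2 - a)))) := by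
    simp only [mul_left_comm (f _)]
    rw [integral_const_mul, hf.integral_mul_exp_anisotropic hs hv one_pos hl,
      show a + s / 2 - 1 = a - 1 + (s / 2 : ℝ) by ring, Real.rpow_add hl, Real.one_rpow]
    ring_nf
  have hswap := integral_integral_swap
    (hf.integrable_mul_rpow_mul_exp_anisotropic hv ha han one_pos)
  simp only [setIntegral_Ioi_mul_rpow_mul_exp_anisotropic _ hv ha] at hswap
  rw [setIntegral_congr_fun measurableSet_Ioi fun l hl => hdx hl, integral_const_mul,
    integral_const_mul, integral_rpow_mul_add_rpow_neg_Ioi (by positivity) (sub_pos.2 han) one_pos,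
    Real.one_rpow, show a + s / 2 + ((n - 1) / 2 - a) = (n - 1 + s : ℝ) / 2 by ring] at hswap
  rw [← inv_mul_eq_iff_eq_mul₀ (Real.Gamma_pos_of_pos ha).ne'] at hswap
  rw [← hswap]
  ring

end AnisotropicGaussian

section PolarCoordinates

theorem integral_volumeIoiPow (d : ℕ) (φ : ℝ → ℝ) :
    ∫ r : Set.Ioi (0 : ℝ), φ r ∂Measure.volumeIoiPow d = ∫ r in Set.Ioi 0, r ^ d * φ r := by
  simp only [Measure.volumeIoiPow, ENNReal.ofReal]
  rw [integral_withDensity_eq_integral_smul (measurable_subtype_coe.pow_const _).real_toNNReal,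
    integral_subtype_comap measurableSet_Ioi fun r => Real.toNNReal (r ^ d) • φ r]
  refine setIntegral_congr_fun measurableSet_Ioi fun r hr => ?_
  simp only [NNReal.smul_def, Real.coe_toNNReal _ (pow_nonneg (le_of_lt hr) _), smul_eq_mul]

theorem volumeIoiPow_ne_zero (d : ℕ) : Measure.volumeIoiPow d ≠ 0 := by
  intro h0
  have := Measure.volumeIoiPow_apply_Iio d ⟨1, Set.mem_Ioi.2 one_pos⟩
  rw [h0, Measure.coe_zero, Pi.zero_apply, eq_comm, ENNReal.ofReal_eq_zero] at this
  exact this.not_gt (by positivity)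

variable {E : Type*} [NormedAddCommGroup E] [NormedSpace ℝ E] {g : E → ℝ}
  {h : Metric.sphere (0 : E) 1 → ℝ} {φ : ℝ → ℝ}

theorem apply_eq_mul_homeomorphUnitSphereProd (hg : ∀ u : Metric.sphere (0 : E) 1, ∀ r : ℝ, 0 < r →
    g (r • (u : E)) = h u * φ r) (x : ({0}ᶜ : Set E)) :
    g x = h (homeomorphUnitSphereProd E x).1 * φ (homeomorphUnitSphereProd E x).2 := by
  have hx : ‖(x : E)‖ ≠ 0 := norm_ne_zero_iff.2 x.2
  rw [← hg _ _ (homeomorphUnitSphereProd E x).2.2]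
  congr 1
  simp [smul_smul, hx]

variable [FiniteDimensional ℝ E] [MeasurableSpace E] [BorelSpace E] {μ : Measure E}
  [μ.IsAddHaarMeasure]

theorem integral_eq_toSphere_mul_of_apply_smul [Nontrivial E]
    (hg : ∀ u : Metric.sphere (0 : E) 1, ∀ r : ℝ, 0 < r → g (r • (u : E)) = h u * φ r) :
    ∫ x, g x ∂μ = (∫ u, h u ∂μ.toSphere) *
      ∫ r in Set.Ioi (0 : ℝ), r ^ (Module.finrank ℝ E - 1) * φ r := by
  rw [← integral_volumeIoiPow, ← integral_prod_mul h fun r : Set.Ioi (0 : ℝ) => φ r,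
    ← μ.measurePreserving_homeomorphUnitSphereProd.integral_comp
      (homeomorphUnitSphereProd E).measurableEmbedding]
  simp only [← apply_eq_mul_homeomorphUnitSphereProd hg]
  rw [integral_subtype_comap (measurableSet_singleton _).compl g, restrict_compl_singleton]

theorem integrable_toSphere_of_apply_smul (hφ : ∀ r, 0 < r → φ r ≠ 0)
    (hg : ∀ u : Metric.sphere (0 : E) 1, ∀ r : ℝ, 0 < r → g (r • (u : E)) = h u * φ r)
    (hint : Integrable g μ) : Integrable h μ.toSphere := by
  have hprod : Integrable (fun z : Metric.sphere (0 : E) 1 × Set.Ioi (0 : ℝ) => h z.1 * φ z.2)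
      (μ.toSphere.prod (Measure.volumeIoiPow (Module.finrank ℝ E - 1))) := by
    rw [← μ.measurePreserving_homeomorphUnitSphereProd.integrable_comp_emb
      (homeomorphUnitSphereProd E).measurableEmbedding]
    exact ((integrableOn_iff_comap_subtypeVal (measurableSet_singleton _).compl).1
      hint.integrableOn).congr (.of_forall (apply_eq_mul_homeomorphUnitSphereProd hg))
  have := ae_neBot.2 (volumeIoiPow_ne_zero (Module.finrank ℝ E - 1))
  obtain ⟨r, hr⟩ := hprod.prod_left_ae.exists
  exact (integrable_mul_const_iff (hφ r r.2).isUnit _).1 hr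

end PolarCoordinates

section Sphere

variable {n s : ℕ} {f : EuclideanSpace ℝ (Fin n) → ℝ} {v : EuclideanSpace ℝ (Fin n)}

theorem IsHarmonicHomogeneous.smul_mul_norm_sq_sub_inner_sq_rpow_neg
    (hf : IsHarmonicHomogeneous n s f) (hv : ‖v‖ = 1) (a : ℝ)
    (u : Metric.sphere (0 : EuclideanSpace ℝ (Fin n)) 1) {r : ℝ} (hr : 0 < r) :
    f (r • (u : EuclideanSpace ℝ (Fin n))) * ((‖r • (u : EuclideanSpace ℝ (Fin n))‖ ^ 2 -
        ⟪r • (u : EuclideanSpace ℝ (Fin n)), v⟫ ^ 2) ^ (-a) *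
          Real.exp (-1 * ‖r • (u : EuclideanSpace ℝ (Fin n))‖ ^ 2)) =
      f u * (1 - ⟪(u : EuclideanSpace ℝ (Fin n)), v⟫ ^ 2) ^ (-a) *
        (r ^ s * ((r ^ 2) ^ (-a) * Real.exp (-r ^ 2))) := by
  have hu : ‖(u : EuclideanSpace ℝ (Fin n))‖ = 1 := norm_eq_of_mem_sphere u
  have hinner : 0 ≤ 1 - ⟪(u : EuclideanSpace ℝ (Fin n)), v⟫ ^ 2 := by
    simpa only [hu, one_pow, sub_nonneg] using real_inner_sq_le_norm_sq (u : EuclideanSpace _ _) hv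
  rw [hf.map_smul, norm_smul, hu, real_inner_smul_left, Real.norm_of_nonneg hr.le, mul_one, mul_pow,
    ← mul_one_sub, Real.mul_rpow (by positivity) hinner, neg_one_mul]
  ring

theorem integral_pow_mul_pow_mul_sq_rpow_neg_mul_exp_Ioi (hn : 0 < n) {a : ℝ}
    (ha : a < (n + s) / 2) :
    ∫ r in Set.Ioi (0 : ℝ), r ^ (n - 1) * (r ^ s * ((r ^ 2) ^ (-a) * Real.exp (-r ^ 2))) =
      Real.Gamma ((n + s) / 2 - a) / 2 := by
  rw [show (n + s : ℝ) / 2 - a = (n + s - 2 * a) / 2 by ring,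
    ← integral_rpow_mul_exp_neg_mul_sq_Ioi (by linarith)]
  refine setIntegral_congr_fun measurableSet_Ioi fun r (hr : 0 < r) => ?_
  simp only [← Real.rpow_natCast r, Nat.cast_pred hn, ← Real.rpow_mul hr.le, ← mul_assoc,
    ← Real.rpow_add hr]
  push_cast
  ring_nf

theorem IsHarmonicHomogeneous.integrable_sphere_mul_one_sub_inner_sq_rpow_neg
    (hf : IsHarmonicHomogeneous n s f) (hv : ‖v‖ = 1) {a : ℝ} (ha : 0 < a)
    (han : a < (n - 1) / 2) :
    Integrable (fun u : Metric.sphere (0 : EuclideanSpace ℝ (Fin n)) 1 =>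
      f u * (1 - ⟪(u : EuclideanSpace ℝ (Fin n)), v⟫ ^ 2) ^ (-a)) (sphereMeasure n) :=
  integrable_toSphere_of_apply_smul (fun r hr => by positivity)
    (fun u _ hr => hf.smul_mul_norm_sq_sub_inner_sq_rpow_neg hv a u hr)
    (hf.integrable_mul_norm_sq_sub_inner_sq_rpow_neg hv ha han one_pos)

theorem IsHarmonicHomogeneous.integral_sphere_mul_one_sub_inner_sq_rpow_neg
    (hf : IsHarmonicHomogeneous n s f) (hs : Even s) (hv : ‖v‖ = 1) {a : ℝ} (ha : 0 < a)
    (han : a < (n - 1) / 2) :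
    ∫ u : Metric.sphere (0 : EuclideanSpace ℝ (Fin n)) 1,
        f u * (1 - ⟪(u : EuclideanSpace ℝ (Fin n)), v⟫ ^ 2) ^ (-a) ∂sphereMeasure n =
      2 * Real.pi ^ (((n : ℝ) - 1) / 2) * Real.Gamma ((s + 1) / 2) * Real.Gamma (a + s / 2) *
        Real.Gamma ((n - 1) / 2 - a) /
          (Real.Gamma a * Real.Gamma ((n - 1 + s) / 2) * Real.Gamma ((n + s) / 2 - a)) * f v := by
  have : Nontrivial (EuclideanSpace ℝ (Fin n)) :=
    nontrivial_of_ne v 0 (norm_ne_zero_iff.1 (hv.trans_ne one_ne_zero))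
  have hans : a < (n + s) / 2 := by linarith [s.cast_nonneg (α := ℝ)]
  have hpolar := integral_eq_toSphere_mul_of_apply_smul (μ := volume)
    (g := fun x => f x * ((‖x‖ ^ 2 - ⟪x, v⟫ ^ 2) ^ (-a) * Real.exp (-1 * ‖x‖ ^ 2)))
    (h := fun u => f u * (1 - ⟪(u : EuclideanSpace ℝ (Fin n)), v⟫ ^ 2) ^ (-a))
    (φ := fun r => r ^ s * ((r ^ 2) ^ (-a) * Real.exp (-r ^ 2)))
    (fun u _ hr => hf.smul_mul_norm_sq_sub_inner_sq_rpow_neg hv a u hr)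
  rw [hf.integral_mul_norm_sq_sub_inner_sq_rpow_neg hs hv ha han, finrank_euclideanSpace_fin,
    integral_pow_mul_pow_mul_sq_rpow_neg_mul_exp_Ioi (by rify; linarith) hans] at hpolar
  have hΓ : Real.Gamma ((n + s) / 2 - a) ≠ 0 := (Real.Gamma_pos_of_pos (sub_pos.2 hans)).ne'
  rw [sphereMeasure, eq_div_of_mul_eq (div_ne_zero hΓ two_ne_zero) hpolar.symm]
  field_simp

end Sphere

theorem omega_mul_Gamma_ratio_eq {n s κ : ℝ} (hs : 0 ≤ s) (h1 : 1 < κ) (hκ : κ < n) :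
    ω (n - 1) * ω κ / ω (κ - 1) *
        (Real.Gamma ((n - 1) / 2) * Real.Gamma (κ / 2) * Real.Gamma ((s + n - κ) / 2) *
          Real.Gamma ((s + 1) / 2)) /
        (Real.Gamma (1 / 2) * Real.Gamma ((n - κ) / 2) * Real.Gamma ((s + κ) / 2) *
          Real.Gamma ((s + n - 1) / 2)) =
      2 * Real.pi ^ ((n - 1) / 2) * Real.Gamma ((s + 1) / 2) * Real.Gamma ((s + n - κ) / 2) *
        Real.Gamma ((κ - 1) / 2) /
        (Real.Gamma ((n - κ) / 2) * Real.Gamma ((s + n - 1) / 2) * Real.Gamma ((s + κ) / 2)) := by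
  have hπ : Real.pi ^ (κ / 2) = Real.pi ^ ((κ - 1) / 2) * √Real.pi := by
    rw [Real.sqrt_eq_rpow, ← Real.rpow_add Real.pi_pos]
    ring_nf
  have hκ0 : Real.Gamma (κ / 2) ≠ 0 := (Real.Gamma_pos_of_pos (by linarith)).ne'
  have hκ1 : Real.Gamma ((κ - 1) / 2) ≠ 0 := (Real.Gamma_pos_of_pos (by linarith)).ne'
  have hn1 : Real.Gamma ((n - 1) / 2) ≠ 0 := (Real.Gamma_pos_of_pos (by linarith)).ne'
  rw [Real.Gamma_one_half_eq, ω, ω, ω, hπ]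
  field_simp

theorem funk_hecke_cos_transform_general {n s : ℕ} (hs : Even s)
    {f : EuclideanSpace ℝ (Fin n) → ℝ} (hf : IsHarmonicHomogeneous n s f)
    {v : EuclideanSpace ℝ (Fin n)} (hv : v ∈ Metric.sphere (0 : EuclideanSpace ℝ (Fin n)) 1)
    {κ : ℝ} (h1 : 1 < κ) (hκ : κ < n) :
    Integrable (fun u : Metric.sphere (0 : EuclideanSpace ℝ (Fin n)) 1 =>
        f u * (1 - ⟪(u : EuclideanSpace ℝ (Fin n)), v⟫ ^ 2) ^ ((κ - n) / 2))
      (sphereMeasure n) ∧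
    ∫ u : Metric.sphere (0 : EuclideanSpace ℝ (Fin n)) 1,
        f u * (1 - ⟪(u : EuclideanSpace ℝ (Fin n)), v⟫ ^ 2) ^ ((κ - n) / 2) ∂(sphereMeasure n)
      = (ω ((n : ℝ) - 1) * ω κ / ω (κ - 1)) *
          (Real.Gamma (((n : ℝ) - 1) / 2) * Real.Gamma (κ / 2) *
            Real.Gamma (((s : ℝ) + n - κ) / 2) * Real.Gamma (((s : ℝ) + 1) / 2)) /
          (Real.Gamma (1 / 2) * Real.Gamma (((n : ℝ) - κ) / 2) *
            Real.Gamma (((s : ℝ) + κ) / 2) * Real.Gamma (((s : ℝ) + n - 1) / 2)) *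
          f v := by
  have hv' : ‖v‖ = 1 := mem_sphere_zero_iff_norm.1 hv
  have ha : 0 < (n - κ) / 2 := by linarith
  have han : (n - κ) / 2 < (n - 1) / 2 := by linarith
  rw [show (κ - n) / 2 = -((n - κ) / 2) by ring]
  refine ⟨hf.integrable_sphere_mul_one_sub_inner_sq_rpow_neg hv' ha han, ?_⟩
  rw [hf.integral_sphere_mul_one_sub_inner_sq_rpow_neg hs hv' ha han,
    omega_mul_Gamma_ratio_eq s.cast_nonneg h1 hκ]
  ring_nf

/-- The Funk–Hecke type evaluation of `∫_{S^{n-1}} f(u) (1 - ⟨u,v⟩²)^{(k-n)/2} dσ(u)` for a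
harmonic homogeneous polynomial `f` of even degree `s`. -/
theorem funk_hecke_cos_transform (n k s : ℕ) (hn : 3 ≤ n) (hk2 : 2 ≤ k) (hk : k ≤ n - 1)
    (hs : Even s) (f : EuclideanSpace ℝ (Fin n) → ℝ) (hf : IsHarmonicHomogeneous n s f)
    (v : EuclideanSpace ℝ (Fin n)) (hv : v ∈ Metric.sphere (0 : EuclideanSpace ℝ (Fin n)) 1) :
    Integrable (fun u : Metric.sphere (0 : EuclideanSpace ℝ (Fin n)) 1 =>
        f u * (1 - ⟪(u : EuclideanSpace ℝ (Fin n)), v⟫ ^ 2) ^ (((k : ℝ) - n) / 2))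
      (sphereMeasure n) ∧
    ∫ u : Metric.sphere (0 : EuclideanSpace ℝ (Fin n)) 1,
        f u * (1 - ⟪(u : EuclideanSpace ℝ (Fin n)), v⟫ ^ 2) ^ (((k : ℝ) - n) / 2)
        ∂(sphereMeasure n)
      = (ω ((n : ℝ) - 1) * ω k / ω ((k : ℝ) - 1)) *
          (Real.Gamma (((n : ℝ) - 1) / 2) * Real.Gamma ((k : ℝ) / 2) *
            Real.Gamma (((s : ℝ) + n - k) / 2) * Real.Gamma (((s : ℝ) + 1) / 2)) /
          (Real.Gamma (1 / 2) * Real.Gamma (((n : ℝ) - k) / 2) *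
            Real.Gamma (((s : ℝ) + k) / 2) * Real.Gamma (((s : ℝ) + n - 1) / 2)) *
          f v := by
  have hkn : k < n := by omega
  exact funk_hecke_cos_transform_general hs hf hv (by exact_mod_cast hk2) (by exact_mod_cast hkn)
end

section
/- For every integer n ≥ 2 and every integer s ≥ 0 there exist a harmonic homogeneous polynomial f of degree s on ℝⁿ, a harmonic homogeneous polynomial h of degree s+2 on ℝⁿ, and a symmetric real n×n matrix X with trace 0, such that ∫_{S^{n−1}} ⟨Xy, y⟩ · f(y) · h(y) dσ(y) ≠ 0. -/
/-!
Let `w y = yₐ + i y_b` for two distinct coordinates `a`, `b`. Since `∑ₖ w(eₖ)² = 1 + i² = 0`, the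
real and imaginary parts of every power of `w` are harmonic, and those of `w²` are the quadratic
forms of trace-free symmetric matrices. Integrating `Re w² · Re wˢ - Im w² · Im wˢ = Re wˢ⁺²`
against `h = Re wˢ⁺²` over the sphere gives `∫ h² > 0`, so one of the two products on the left has
a nonzero integral against `h`.
-/

open MeasureTheory
open scoped RealInnerProductSpace

/-- The action of a matrix `X` on a vector `y ∈ ℝⁿ`, as a vector of Euclidean space. -/
noncomputable def mulVecE {n : ℕ} (X : Matrix (Fin n) (Fin n) ℝ)
    (y : EuclideanSpace ℝ (Fin n)) : EuclideanSpace ℝ (Fin n) :=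
  (WithLp.equiv 2 (Fin n → ℝ)).symm (X.mulVec fun i => y i)

section Derivatives

variable {E A : Type*} [NormedAddCommGroup E] [NormedSpace ℝ E] [NormedCommRing A]
  [NormedAlgebra ℝ A]

lemma fderiv_clm_mul_clm_pow_apply (φ : A →L[ℝ] ℝ) (L : E →L[ℝ] A) (c : A) (s : ℕ) (y v : E) :
    fderiv ℝ (fun z ↦ φ (c * L z ^ s)) y v = φ (s * c * L v * L y ^ (s - 1)) := by
  have h : HasFDerivAt (fun z ↦ φ (c * L z ^ s)) _ y :=
    φ.hasFDerivAt.comp y ((L.hasFDerivAt.pow s).const_mul c)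
  rw [h.fderiv]
  simp only [ContinuousLinearMap.comp_apply, smul_apply, smul_eq_mul, nsmul_eq_mul]
  congr 1
  ring

lemma secondPartialDeriv_clm_pow {n : ℕ} (φ : A →L[ℝ] ℝ) (L : EuclideanSpace ℝ (Fin n) →L[ℝ] A)
    (s : ℕ) (i j : Fin n) (y : EuclideanSpace ℝ (Fin n)) :
    secondPartialDeriv (fun z ↦ φ (L z ^ s)) i j y =
      φ (L (EuclideanSpace.single i 1) * L (EuclideanSpace.single j 1) *
        (s * (s - 1 : ℕ) * L y ^ (s - 2))) := by
  have first_deriv (z v) :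
      fderiv ℝ (fun z ↦ φ (L z ^ s)) z v = φ (s * L v * L z ^ (s - 1)) := by
    simpa using fderiv_clm_mul_clm_pow_apply φ L 1 s z v
  simp only [secondPartialDeriv, first_deriv, fderiv_clm_mul_clm_pow_apply, Nat.sub_sub]
  congr 1
  ring

end Derivatives

lemma exists_eval_eq_apply_eval_algebraMap {σ R A : Type*} [CommSemiring R] [CommSemiring A]
    [Algebra R A] (φ : A →ₗ[R] R) (P : MvPolynomial σ A) :
    ∃ p : MvPolynomial σ R, ∀ y : σ → R,
      p.eval y = φ (P.eval fun i ↦ algebraMap R A (y i)) := by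
  induction P using MvPolynomial.induction_on' with
  | monomial d a =>
    refine ⟨MvPolynomial.monomial d (φ a), fun y ↦ ?_⟩
    simp only [MvPolynomial.eval_monomial, Finsupp.prod, ← map_pow, ← map_prod]
    rw [mul_comm a, ← Algebra.smul_def, map_smul, smul_eq_mul, mul_comm]
  | add P Q hP hQ =>
    obtain ⟨p, hp⟩ := hP
    obtain ⟨q, hq⟩ := hQ
    exact ⟨p + q, fun y ↦ by simp only [map_add, hp, hq]⟩

lemma map_eq_sum_smul_map_single {ι F M : Type*} [Fintype ι] [DecidableEq ι]
    [AddCommGroup M] [Module ℝ M] [FunLike F (EuclideanSpace ℝ ι) M]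
    [LinearMapClass F ℝ (EuclideanSpace ℝ ι) M] (L : F) (y : EuclideanSpace ℝ ι) :
    L y = ∑ i, y i • L (EuclideanSpace.single i 1) := by
  conv_lhs => rw [← (EuclideanSpace.basisFun ι ℝ).sum_repr y]
  simp

lemma exists_eval_eq_linearMap_pow {ι A : Type*} [Finite ι] [CommRing A] [Algebra ℝ A]
    (φ : A →ₗ[ℝ] ℝ) (L : EuclideanSpace ℝ ι →ₗ[ℝ] A) (s : ℕ) :
    ∃ p : MvPolynomial ι ℝ, ∀ y : EuclideanSpace ℝ ι, φ (L y ^ s) = p.eval fun i ↦ y i := by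
  classical
  have := Fintype.ofFinite ι
  obtain ⟨p, hp⟩ := exists_eval_eq_apply_eval_algebraMap φ
    ((∑ i, MvPolynomial.C (L (EuclideanSpace.single i 1)) * MvPolynomial.X i) ^ s)
  refine ⟨p, fun y ↦ ?_⟩
  rw [hp, map_eq_sum_smul_map_single L y]
  simp [Algebra.smul_def, mul_comm]

section IsotropicForms

variable {n : ℕ} {A : Type*} [NormedCommRing A] [NormedAlgebra ℝ A]
  {L : EuclideanSpace ℝ (Fin n) →L[ℝ] A}

/-- A linear form `L` on `ℝⁿ` with values in a commutative real algebra is isotropic if its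
coefficient vector has square zero for the bilinear (not Hermitian) dot product. This is what makes
the real components of the powers of `L` harmonic. -/
def IsIsotropic (L : EuclideanSpace ℝ (Fin n) →L[ℝ] A) : Prop :=
  ∑ i, L (EuclideanSpace.single i 1) ^ 2 = 0

lemma IsIsotropic.isHarmonicHomogeneous_pow (hL : IsIsotropic L) (φ : A →L[ℝ] ℝ) (s : ℕ) :
    IsHarmonicHomogeneous n s fun y ↦ φ (L y ^ s) := by
  refine ⟨exists_eval_eq_linearMap_pow φ.toLinearMap L.toLinearMap s, fun t _ y ↦ ?_,
    fun y ↦ ?_⟩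
  · simp only [map_smul, smul_pow, smul_eq_mul]
  · simp only [secondPartialDeriv_clm_pow, ← pow_two]
    rw [← map_sum, ← Finset.sum_mul, hL, zero_mul, map_zero]

/-- The matrix, in the standard basis, of the real quadratic form `y ↦ φ (L y ^ 2)` on `ℝⁿ`;
it supplies the trace-free matrices when `L` is isotropic. -/
noncomputable def sqMatrix (φ : A →L[ℝ] ℝ) (L : EuclideanSpace ℝ (Fin n) →L[ℝ] A) :
    Matrix (Fin n) (Fin n) ℝ :=
  .of fun i j ↦ φ (L (EuclideanSpace.single i 1) * L (EuclideanSpace.single j 1))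

lemma isSymm_sqMatrix (φ : A →L[ℝ] ℝ) (L : EuclideanSpace ℝ (Fin n) →L[ℝ] A) :
    (sqMatrix φ L).IsSymm :=
  .ext fun _ _ ↦ congrArg φ (mul_comm _ _)

lemma IsIsotropic.trace_sqMatrix (hL : IsIsotropic L) (φ : A →L[ℝ] ℝ) :
    (sqMatrix φ L).trace = 0 := by
  simp only [Matrix.trace, Matrix.diag_apply, sqMatrix, Matrix.of_apply, ← pow_two]
  rw [← map_sum, hL, map_zero]

lemma inner_mulVecE_sqMatrix (φ : A →L[ℝ] ℝ) (L : EuclideanSpace ℝ (Fin n) →L[ℝ] A)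
    (y : EuclideanSpace ℝ (Fin n)) :
    ⟪mulVecE (sqMatrix φ L) y, y⟫ = φ (L y ^ 2) := by
  rw [map_eq_sum_smul_map_single L y, pow_two, Finset.sum_mul_sum]
  simp [mulVecE, sqMatrix, PiLp.inner_apply, Matrix.mulVec, dotProduct, Finset.mul_sum,
    mul_left_comm, mul_comm (φ _)]

end IsotropicForms

section ComplexCoordinate

variable {n : ℕ} {a b : Fin n}

/-- The complex coordinate `y ↦ yₐ + i y_b` on `ℝⁿ`, the basic isotropic form when `a ≠ b`. -/
noncomputable def complexCoord (a b : Fin n) : EuclideanSpace ℝ (Fin n) →L[ℝ] ℂ :=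
  Complex.ofRealCLM.comp (EuclideanSpace.proj a) + (EuclideanSpace.proj b).smulRight Complex.I

lemma complexCoord_single_left (hab : a ≠ b) :
    complexCoord a b (EuclideanSpace.single a 1) = 1 := by
  simp [complexCoord, hab.symm]

lemma complexCoord_single_right (hab : a ≠ b) :
    complexCoord a b (EuclideanSpace.single b 1) = Complex.I := by
  simp [complexCoord, hab]

lemma complexCoord_single_of_ne {c : Fin n} (hca : c ≠ a) (hcb : c ≠ b) :
    complexCoord a b (EuclideanSpace.single c 1) = 0 := by
  simp [complexCoord, hca.symm, hcb.symm]

lemma isIsotropic_complexCoord (hab : a ≠ b) : IsIsotropic (complexCoord a b) := by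
  rw [IsIsotropic, Fintype.sum_eq_add a b hab fun c hc ↦ by
    rw [complexCoord_single_of_ne hc.1 hc.2, zero_pow two_ne_zero]]
  simp [complexCoord_single_left hab, complexCoord_single_right hab]

end ComplexCoordinate

section Integration

instance (n : ℕ) : IsFiniteMeasure (sphereMeasure n) :=
  inferInstanceAs (IsFiniteMeasure volume.toSphere)

instance (n : ℕ) : (sphereMeasure n).IsOpenPosMeasure :=
  inferInstanceAs volume.toSphere.IsOpenPosMeasure

variable {X : Type*} [TopologicalSpace X] [CompactSpace X] [MeasurableSpace X]
  [OpensMeasurableSpace X] {μ : Measure X} [IsFiniteMeasureOnCompacts μ]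

lemma integral_sq_pos_of_continuous [μ.IsOpenPosMeasure] {g : X → ℝ} (hg : Continuous g) {x : X}
    (hx : g x ≠ 0) : 0 < ∫ y, g y ^ 2 ∂μ :=
  (hg.pow 2).integral_pos_of_hasCompactSupport_nonneg_nonzero (.of_compactSpace _)
    (fun _ ↦ sq_nonneg _) (pow_ne_zero 2 hx)

lemma integral_re_sub_integral_im_eq_integral_sq {w : X → ℂ} (hw : Continuous w) (s : ℕ) :
    ∫ y, (w y ^ 2).re * (w y ^ s).re * (w y ^ (s + 2)).re ∂μ -
      ∫ y, (w y ^ 2).im * (w y ^ s).im * (w y ^ (s + 2)).re ∂μ =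
    ∫ y, (w y ^ (s + 2)).re ^ 2 ∂μ := by
  rw [← integral_sub
    (Continuous.integrable_of_hasCompactSupport (by fun_prop) (.of_compactSpace _))
    (Continuous.integrable_of_hasCompactSupport (by fun_prop) (.of_compactSpace _))]
  congr with y
  rw [← sub_mul, ← Complex.mul_re, ← pow_add, add_comm 2 s, pow_two]

end Integration

/-- There exist harmonic homogeneous polynomials `f` of degree `s` and `h` of degree `s+2`
and a trace-free symmetric matrix `X` with `∫_{S^{n-1}} ⟨Xy,y⟩ f(y) h(y) dσ(y) ≠ 0`. -/
theorem exists_nonvanishing_pairing (n s : ℕ) (hn : 2 ≤ n) :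
    ∃ (f h : EuclideanSpace ℝ (Fin n) → ℝ) (X : Matrix (Fin n) (Fin n) ℝ),
      IsHarmonicHomogeneous n s f ∧ IsHarmonicHomogeneous n (s + 2) h ∧
      X.IsSymm ∧ X.trace = 0 ∧
      (∫ y : Metric.sphere (0 : EuclideanSpace ℝ (Fin n)) 1,
          ⟪mulVecE X y, (y : EuclideanSpace ℝ (Fin n))⟫ * f y * h y ∂(sphereMeasure n)) ≠ 0 := by
  obtain ⟨a, b, hab⟩ : ∃ a b : Fin n, a ≠ b :=
    have := Fin.nontrivial_iff_two_le.mpr hn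
    exists_pair_ne (Fin n)
  let w := complexCoord a b
  have hw : IsIsotropic w := isIsotropic_complexCoord hab
  have harmonic (φ : ℂ →L[ℝ] ℝ) (k : ℕ) : IsHarmonicHomogeneous n k fun y ↦ φ (w y ^ k) :=
    hw.isHarmonicHomogeneous_pow φ k
  have sq_pos : 0 < ∫ y : Metric.sphere (0 : EuclideanSpace ℝ (Fin n)) 1,
      (w y ^ (s + 2)).re ^ 2 ∂(sphereMeasure n) := by
    refine integral_sq_pos_of_continuous (x := ⟨EuclideanSpace.single a 1, by simp⟩)
      (by fun_prop) ?_
    simp [w, complexCoord_single_left hab]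
  by_contra! vanishing
  have pairing_eq_zero (φ : ℂ →L[ℝ] ℝ) := vanishing _ _ (sqMatrix φ w) (harmonic φ s)
    (harmonic Complex.reCLM (s + 2)) (isSymm_sqMatrix φ w) (hw.trace_sqMatrix φ)
  simp only [inner_mulVecE_sqMatrix] at pairing_eq_zero
  refine sq_pos.ne' ?_
  rw [← integral_re_sub_integral_im_eq_integral_sq (by fun_prop) s]
  exact sub_eq_zero_of_eq
    ((pairing_eq_zero Complex.reCLM).trans (pairing_eq_zero Complex.imCLM).symm)
end

section
/- Let n ≥ 2, let X be a symmetric real n×n matrix with trace 0, and let f, h : ℝⁿ \ {0} → ℝ be smooth functions that are positively homogeneous of degree 0 (i.e. f(ty) = f(y) and h(ty) = h(y) for all t > 0). Then ∫_{S^{n−1}} [⟨∇f(y), Xy⟩ · h(y) + f(y) · ⟨∇h(y), Xy⟩] dσ(y) = n · ∫_{S^{n−1}} ⟨Xy, y⟩ · f(y) · h(y) dσ(y). -/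
open MeasureTheory
open scoped RealInnerProductSpace

/-!
For `G` positively homogeneous of degree `s`, multiply `G` by a cutoff `φ ‖x‖` and apply the
divergence theorem on the whole space twice: to the field `x ↦ A x` with the function `φ ‖x‖ • G`,
and to the Euler field `x ↦ x` with the function `φ ‖x‖ • q • G`, where `q` is the Rayleigh quotient
of `A`. The field `A x - q x • x` is tangent to the spheres, so the derivatives of the cutoff cancel
in the difference, while Euler's identity evaluates the radial derivative of `q • G`. What is left
is an equality of integrals of homogeneous functions of degree `s` against the same radial weight,
and in polar coordinates the radial factor cancels.
-/

open Set Filter Topology Module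

section Homogeneous

variable {E V : Type*} [NormedAddCommGroup E] [NormedSpace ℝ E]
  [NormedAddCommGroup V] [NormedSpace ℝ V]

/-- Positive homogeneity of real degree `s` away from the origin. The value at `0` is left
unconstrained, so that functions defined on `E \ {0}` are covered whatever their extension. -/
def IsPosHomogeneous (s : ℝ) (G : E → V) : Prop :=
  ∀ ⦃t : ℝ⦄, 0 < t → ∀ ⦃x : E⦄, x ≠ 0 → G (t • x) = t ^ s • G x

namespace IsPosHomogeneous

variable {a s : ℝ} {f : E → ℝ} {G : E → V}

theorem smul (hf : IsPosHomogeneous a f) (hG : IsPosHomogeneous s G) :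
    IsPosHomogeneous (a + s) fun x => f x • G x := by
  intro t ht x hx
  simp only [hf ht hx, hG ht hx, Real.rpow_add ht, smul_eq_mul, smul_smul]
  ring_nf

theorem fderiv_apply_clm (hG : IsPosHomogeneous s G) (A : E →L[ℝ] E) :
    IsPosHomogeneous s fun x => fderiv ℝ G x (A x) := by
  intro t ht x hx
  have hloc : (fun z => G (t • z)) =ᶠ[𝓝 x] t ^ s • G := by
    filter_upwards [isOpen_ne.mem_nhds hx] with z hz using hG ht hz
  have hderiv : t • fderiv ℝ G (t • x) = t ^ s • fderiv ℝ G x := by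
    rw [← fderiv_comp_smul, hloc.fderiv_eq, fderiv_const_smul_field, Pi.smul_apply]
  simpa using congr($hderiv (A x))

theorem fderiv_apply_self (hG : IsPosHomogeneous s G) {x : E} (hx : x ≠ 0)
    (hGx : DifferentiableAt ℝ G x) : fderiv ℝ G x x = s • G x := by
  have hray : HasDerivAt (fun t : ℝ => G (t • x)) (fderiv ℝ G x x) 1 := by
    have hline : HasDerivAt (fun t : ℝ => t • x) x 1 := by
      simpa using (hasDerivAt_id (1 : ℝ)).smul_const x
    exact HasFDerivAt.comp_hasDerivAt (1 : ℝ) (by simpa using hGx.hasFDerivAt) hline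
  have hpow : HasDerivAt (fun t : ℝ => t ^ s • G x) (s • G x) 1 := by
    simpa using (Real.hasDerivAt_rpow_const (p := s) (Or.inl one_ne_zero)).smul_const (G x)
  refine hray.unique (hpow.congr_of_eventuallyEq ?_)
  filter_upwards [lt_mem_nhds (zero_lt_one' ℝ)] with t ht using hG ht hx

end IsPosHomogeneous

theorem isPosHomogeneous_norm_rpow (s : ℝ) : IsPosHomogeneous s fun x : E => ‖x‖ ^ s := by
  intro t ht x _
  simp [norm_smul, abs_of_pos ht, Real.mul_rpow ht.le (norm_nonneg x)]

end Homogeneous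

section Divergence

theorem integrable_fderiv_apply_of_hasCompactSupport {E V : Type*} [NormedAddCommGroup E]
    [NormedSpace ℝ E] [MeasurableSpace E] [OpensMeasurableSpace E] {μ : Measure E}
    [IsFiniteMeasureOnCompacts μ] [NormedAddCommGroup V] [NormedSpace ℝ V] {G : E → V}
    (hG : ContDiff ℝ 1 G) (hGc : HasCompactSupport G) {v : E → E} (hv : Continuous v) :
    Integrable (fun x => fderiv ℝ G x (v x)) μ := by
  have hcont := hG.continuous_fderiv one_ne_zero
  refine (hcont.clm_apply hv).integrable_of_hasCompactSupport
    ((hGc.fderiv (𝕜 := ℝ)).mono fun x hx hzero => hx ?_)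
  simp only [hzero, zero_apply]

variable {E V : Type*} [NormedAddCommGroup E] [NormedSpace ℝ E] [FiniteDimensional ℝ E]
  [MeasurableSpace E] [BorelSpace E] (μ : Measure E) [μ.IsAddHaarMeasure]
  [NormedAddCommGroup V] [NormedSpace ℝ V] {G : E → V}

theorem integral_clm_smul_fderiv_apply (l : E →L[ℝ] ℝ) (v : E) (hG : ContDiff ℝ 1 G)
    (hGc : HasCompactSupport G) :
    ∫ x, l x • fderiv ℝ G x v ∂μ = -(l v • ∫ x, G x ∂μ) := by
  have := hG.continuous_fderiv one_ne_zero
  rw [integral_smul_fderiv_eq_neg_fderiv_smul_of_integrable]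
  · simp only [ContinuousLinearMap.fderiv, integral_smul]
  · simp only [ContinuousLinearMap.fderiv]
    exact (hG.continuous.integrable_of_hasCompactSupport hGc).smul (l v)
  · exact Continuous.integrable_of_hasCompactSupport (by fun_prop)
      (hGc.fderiv_apply ℝ v).smul_left
  · exact (l.continuous.smul hG.continuous).integrable_of_hasCompactSupport hGc.smul_left
  · exact fun x _ => l.differentiableAt
  · exact fun x _ => hG.differentiable one_ne_zero x

theorem integral_fderiv_apply_clm (A : E →L[ℝ] E) (hG : ContDiff ℝ 1 G)
    (hGc : HasCompactSupport G) :
    ∫ x, fderiv ℝ G x (A x) ∂μ = -(LinearMap.trace ℝ E A • ∫ x, G x ∂μ) := by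
  let b := finBasis ℝ E
  let l (i : Fin (finrank ℝ E)) : E →L[ℝ] ℝ := (b.coord i).toContinuousLinearMap ∘L A
  have := hG.continuous_fderiv one_ne_zero
  have hexpand (x : E) : fderiv ℝ G x (A x) = ∑ i, l i x • fderiv ℝ G x (b i) := by
    conv_lhs => rw [← b.sum_repr (A x), map_sum]
    simp [l]
  have hint (i : Fin (finrank ℝ E)) : Integrable (fun x => l i x • fderiv ℝ G x (b i)) μ :=
    Continuous.integrable_of_hasCompactSupport (by fun_prop) (hGc.fderiv_apply ℝ (b i)).smul_left
  have htrace : LinearMap.trace ℝ E A = ∑ i, l i (b i) := by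
    simp [LinearMap.trace_eq_matrix_trace ℝ b, Matrix.trace, LinearMap.toMatrix_apply, l]
  simp only [hexpand]
  rw [integral_finsetSum _ fun i _ => hint i, htrace, Finset.sum_smul, ← Finset.sum_neg_distrib]
  exact Finset.sum_congr rfl fun i _ => integral_clm_smul_fderiv_apply μ (l i) (b i) hG hGc

theorem integral_fderiv_apply_clm_sub_fderiv_apply_self (A : E →L[ℝ] E) {F H : E → V}
    (hF : ContDiff ℝ 1 F) (hFc : HasCompactSupport F) (hH : ContDiff ℝ 1 H)
    (hHc : HasCompactSupport H) :
    ∫ x, (fderiv ℝ F x (A x) - fderiv ℝ H x x) ∂μ =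
      ∫ x, ((finrank ℝ E : ℝ) • H x - LinearMap.trace ℝ E A • F x) ∂μ := by
  have hFi : Integrable F μ := hF.continuous.integrable_of_hasCompactSupport hFc
  have hHi : Integrable H μ := hH.continuous.integrable_of_hasCompactSupport hHc
  have hDF := integrable_fderiv_apply_of_hasCompactSupport (μ := μ) hF hFc A.continuous
  have hDH := integrable_fderiv_apply_of_hasCompactSupport (μ := μ) hH hHc continuous_id
  have hEuler : ∫ x, fderiv ℝ H x x ∂μ = -((finrank ℝ E : ℝ) • ∫ x, H x ∂μ) := by
    simpa using integral_fderiv_apply_clm μ (ContinuousLinearMap.id ℝ E) hH hHc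
  calc
    ∫ x, (fderiv ℝ F x (A x) - fderiv ℝ H x x) ∂μ
      = ∫ x, fderiv ℝ F x (A x) ∂μ - ∫ x, fderiv ℝ H x x ∂μ := integral_sub hDF hDH
    _ = (finrank ℝ E : ℝ) • ∫ x, H x ∂μ - LinearMap.trace ℝ E A • ∫ x, F x ∂μ := by
        rw [integral_fderiv_apply_clm μ A hF hFc, hEuler]
        abel
    _ = ∫ x, ((finrank ℝ E : ℝ) • H x - LinearMap.trace ℝ E A • F x) ∂μ := by
        rw [integral_sub (hHi.fun_smul _) (hFi.fun_smul _), integral_smul, integral_smul]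

theorem integral_norm_smul_of_isPosHomogeneous [Nontrivial E] {s : ℝ} (φ : ℝ → ℝ)
    (hG : IsPosHomogeneous s G) :
    ∫ x, φ ‖x‖ • G x ∂μ =
      (∫ r : Ioi (0 : ℝ), φ r * (r : ℝ) ^ s ∂(Measure.volumeIoiPow (finrank ℝ E - 1))) •
        ∫ y : Metric.sphere (0 : E) 1, G y ∂μ.toSphere := by
  have hpolar (x : ({0}ᶜ : Set E)) : φ ‖x.1‖ • G x.1 =
      (φ ‖x.1‖ * ‖x.1‖ ^ s) • G (homeomorphUnitSphereProd E x).1 := by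
    have hx : 0 < ‖x.1‖ := norm_pos_iff.2 x.2
    have hGx := hG hx (x := ‖x.1‖⁻¹ • x.1) (smul_ne_zero (inv_pos.2 hx).ne' x.2)
    rw [smul_inv_smul₀ hx.ne'] at hGx
    simp [mul_smul, ← hGx]
  calc
    ∫ x, φ ‖x‖ • G x ∂μ = ∫ x : ({0}ᶜ : Set E), φ ‖x.1‖ • G x.1 ∂(μ.comap (↑)) := by
      rw [integral_subtype_comap (measurableSet_singleton _).compl fun x => φ ‖x‖ • G x,
        restrict_compl_singleton]
    _ = ∫ p, (φ p.2 * (p.2 : ℝ) ^ s) • G p.1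
          ∂μ.toSphere.prod (Measure.volumeIoiPow (finrank ℝ E - 1)) := by
      simp only [hpolar]
      simpa using μ.measurePreserving_homeomorphUnitSphereProd.integral_comp
        (Homeomorph.measurableEmbedding _)
        fun p : Metric.sphere (0 : E) 1 × Ioi (0 : ℝ) => (φ p.2 * (p.2 : ℝ) ^ s) • G p.1
    _ = _ := by
      rw [← integral_prod_swap]
      exact integral_prod_smul (fun r : Ioi (0 : ℝ) => φ r * (r : ℝ) ^ s)
        fun y : Metric.sphere (0 : E) 1 => G y

end Divergence

section Cutoff

theorem hasCompactSupport_comp_norm {E : Type*} [SeminormedAddGroup E] [ProperSpace E]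
    {φ : ℝ → ℝ} (hφ : HasCompactSupport φ) : HasCompactSupport fun x : E => φ ‖x‖ := by
  rw [hasCompactSupport_iff_eventuallyEq, coclosedCompact_eq_cocompact] at hφ ⊢
  exact (tendsto_norm_cocompact_atTop.mono_right atTop_le_cocompact).eventually hφ

variable {E V : Type*} [NormedAddCommGroup E] [InnerProductSpace ℝ E]
  [NormedAddCommGroup V] [NormedSpace ℝ V] {φ : ℝ → ℝ} {G : E → V}

theorem hasFDerivAt_norm_of_ne_zero {x : E} (hx : x ≠ 0) :
    HasFDerivAt (fun z : E => ‖z‖) (‖x‖⁻¹ • innerSL ℝ x) x := by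
  have hsqrt := (hasStrictFDerivAt_norm_sq x).hasFDerivAt.sqrt (by simpa using hx)
  simp only [Real.sqrt_sq (norm_nonneg _)] at hsqrt
  convert! hsqrt using 1
  ext v
  simp only [smul_apply, coe_innerSL_apply, smul_eq_mul, one_div, mul_inv_rev, nsmul_eq_mul,
    Nat.cast_ofNat]
  field_simp

theorem fderiv_comp_norm_smul {x : E} (hx : x ≠ 0) (hφ : DifferentiableAt ℝ φ ‖x‖)
    (hG : DifferentiableAt ℝ G x) (v : E) :
    fderiv ℝ (fun z => φ ‖z‖ • G z) x v =
      φ ‖x‖ • fderiv ℝ G x v + (deriv φ ‖x‖ * (⟪v, x⟫ / ‖x‖)) • G x := by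
  have hcut : HasFDerivAt (fun z : E => φ ‖z‖) (deriv φ ‖x‖ • ‖x‖⁻¹ • innerSL ℝ x) x :=
    hφ.hasDerivAt.comp_hasFDerivAt x (hasFDerivAt_norm_of_ne_zero hx)
  rw [(hcut.fun_smul hG.hasFDerivAt).fderiv]
  simp [real_inner_comm, div_eq_inv_mul]

theorem contDiff_comp_norm_smul {n : WithTop ℕ∞} (hφ : ContDiff ℝ n φ) (hφ0 : 0 ∉ tsupport φ)
    (hG : ContDiffOn ℝ n G {0}ᶜ) : ContDiff ℝ n fun x => φ ‖x‖ • G x := by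
  rw [contDiff_iff_contDiffAt]
  intro x
  obtain rfl | hx := eq_or_ne x 0
  · have hnorm : Tendsto (fun z : E => ‖z‖) (𝓝 0) (𝓝 0) := tendsto_norm_zero
    have hvanish : (fun z => φ ‖z‖ • G z) =ᶠ[𝓝 0] fun _ => 0 := by
      filter_upwards [hnorm.eventually (notMem_tsupport_iff_eventuallyEq.1 hφ0)] with z hz
      simp [hz]
    exact contDiffAt_const.congr_of_eventuallyEq hvanish
  · exact (hφ.contDiffAt.comp x (contDiffAt_norm ℝ hx)).smul
      (hG.contDiffAt (isOpen_compl_singleton.mem_nhds hx))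

end Cutoff

section RayleighQuotient

variable {E : Type*} [NormedAddCommGroup E] [InnerProductSpace ℝ E] (A : E →L[ℝ] E)

theorem isPosHomogeneous_rayleighQuotient : IsPosHomogeneous 0 A.rayleighQuotient := by
  intro t ht x _
  rw [Real.rpow_zero, one_smul]
  exact A.rayleigh_smul x ht.ne'

theorem contDiffOn_rayleighQuotient {n : WithTop ℕ∞} : ContDiffOn ℝ n A.rayleighQuotient {0}ᶜ := by
  have hinner : ContDiff ℝ n A.reApplyInnerSelf := A.contDiff.inner ℝ contDiff_id
  exact hinner.contDiffOn.div (contDiff_norm_sq ℝ).contDiffOn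
    fun x hx => pow_ne_zero 2 (norm_ne_zero_iff.2 hx)

end RayleighQuotient

section Sphere

variable {E V : Type*} [NormedAddCommGroup E] [InnerProductSpace ℝ E]
  [NormedAddCommGroup V] [NormedSpace ℝ V] {φ : ℝ → ℝ} {s : ℝ} {G : E → V}

theorem fderiv_comp_norm_smul_sub_rayleighQuotient (A : E →L[ℝ] E) {x : E} (hx : x ≠ 0)
    (hφ : DifferentiableAt ℝ φ ‖x‖) (hG : DifferentiableAt ℝ G x) (hGs : IsPosHomogeneous s G) :
    fderiv ℝ (fun z => φ ‖z‖ • G z) x (A x) -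
        fderiv ℝ (fun z => φ ‖z‖ • A.rayleighQuotient z • G z) x x =
      φ ‖x‖ • fderiv ℝ G x (A x) - s • φ ‖x‖ • A.rayleighQuotient x • G x := by
  have hqG : DifferentiableAt ℝ (fun z => A.rayleighQuotient z • G z) x :=
    (((contDiffOn_rayleighQuotient A).contDiffAt
      (isOpen_compl_singleton.mem_nhds hx)).differentiableAt one_ne_zero).smul hG
  have heuler := ((isPosHomogeneous_rayleighQuotient A).smul hGs).fderiv_apply_self hx hqG
  have hradial : ⟪x, x⟫ / ‖x‖ * A.rayleighQuotient x = ⟪A x, x⟫ / ‖x‖ := by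
    have := norm_ne_zero_iff.2 hx
    rw [ContinuousLinearMap.rayleighQuotient, A.reApplyInnerSelf_apply,
      real_inner_self_eq_norm_sq, RCLike.re_to_real]
    field_simp
  rw [fderiv_comp_norm_smul hx hφ hG, fderiv_comp_norm_smul hx hφ hqG, heuler, ← hradial]
  module

variable [FiniteDimensional ℝ E] [MeasurableSpace E] [BorelSpace E]
  (μ : Measure E) [μ.IsAddHaarMeasure]

theorem integral_norm_smul_fderiv_apply_clm [Nontrivial E] (A : E →L[ℝ] E)
    (hφ : ContDiff ℝ 1 φ) (hφc : HasCompactSupport φ) (hφ0 : 0 ∉ tsupport φ)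
    (hG : ContDiffOn ℝ 1 G {0}ᶜ) (hGs : IsPosHomogeneous s G) :
    ∫ x, φ ‖x‖ • fderiv ℝ G x (A x) ∂μ =
      ∫ x, φ ‖x‖ • ((finrank ℝ E + s) * A.rayleighQuotient x - LinearMap.trace ℝ E A) • G x ∂μ := by
  let F (x : E) : V := φ ‖x‖ • G x
  let H (x : E) : V := φ ‖x‖ • A.rayleighQuotient x • G x
  have hF : ContDiff ℝ 1 F := contDiff_comp_norm_smul hφ hφ0 hG
  have hH : ContDiff ℝ 1 H :=
    contDiff_comp_norm_smul hφ hφ0 ((contDiffOn_rayleighQuotient A).smul hG)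
  have hFc : HasCompactSupport F := (hasCompactSupport_comp_norm hφc).smul_right
  have hHc : HasCompactSupport H := (hasCompactSupport_comp_norm hφc).smul_right
  have hFi : Integrable F μ := hF.continuous.integrable_of_hasCompactSupport hFc
  have hHi : Integrable H μ := hH.continuous.integrable_of_hasCompactSupport hHc
  have hsHi : Integrable (fun x => s • H x) μ := hHi.fun_smul s
  have hDi : Integrable (fun x => fderiv ℝ F x (A x) - fderiv ℝ H x x) μ :=
    (integrable_fderiv_apply_of_hasCompactSupport hF hFc A.continuous).sub
      (integrable_fderiv_apply_of_hasCompactSupport hH hHc continuous_id)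
  calc
    ∫ x, φ ‖x‖ • fderiv ℝ G x (A x) ∂μ
      = ∫ x, (fderiv ℝ F x (A x) - fderiv ℝ H x x + s • H x) ∂μ := by
        refine integral_congr_ae ((Measure.ae_ne μ 0).mono fun x hx => ?_)
        have hGx := (hG.contDiffAt (isOpen_compl_singleton.mem_nhds hx)).differentiableAt
          one_ne_zero
        exact sub_eq_iff_eq_add.1 (fderiv_comp_norm_smul_sub_rayleighQuotient A hx
          (hφ.differentiable one_ne_zero _) hGx hGs).symm
    _ = ∫ x, ((finrank ℝ E : ℝ) • H x - LinearMap.trace ℝ E A • F x + s • H x) ∂μ := by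
        rw [integral_add hDi hsHi,
          integral_fderiv_apply_clm_sub_fderiv_apply_self μ A hF hFc hH hHc]
        exact (integral_add ((hHi.fun_smul _).sub (hFi.fun_smul _)) hsHi).symm
    _ = _ := by
        congr 1 with x
        simp only [F, H]
        module

theorem integral_norm_smul_norm_rpow_pos [Nontrivial E] (s : ℝ) (hφ : ContDiff ℝ 1 φ)
    (hφc : HasCompactSupport φ) (hφ0 : 0 ∉ tsupport φ) (hφnonneg : 0 ≤ φ) (hφ1 : φ 1 ≠ 0) :
    0 < ∫ x, φ ‖x‖ • ‖x‖ ^ s ∂μ := by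
  obtain ⟨e, he⟩ := exists_norm_eq E zero_le_one
  have hsmooth : ContDiffOn ℝ 1 (fun x : E => ‖x‖ ^ s) {0}ᶜ := fun x hx =>
    ((contDiffAt_norm ℝ hx).rpow_const_of_ne (norm_ne_zero_iff.2 hx)).contDiffWithinAt
  exact (contDiff_comp_norm_smul hφ hφ0 hsmooth).continuous
    |>.integral_pos_of_hasCompactSupport_nonneg_nonzero (x := e)
      (hasCompactSupport_comp_norm hφc).smul_right
      (fun x => smul_nonneg (hφnonneg _) (by positivity)) (by simpa [he])

theorem integral_toSphere_fderiv_apply_clm (A : E →L[ℝ] E) (hG : ContDiffOn ℝ 1 G {0}ᶜ)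
    (hGs : IsPosHomogeneous s G) :
    ∫ y : Metric.sphere (0 : E) 1, fderiv ℝ G y (A y) ∂μ.toSphere =
      ∫ y : Metric.sphere (0 : E) 1,
        ((finrank ℝ E + s) * A.rayleighQuotient y - LinearMap.trace ℝ E A) • G y ∂μ.toSphere := by
  cases subsingleton_or_nontrivial E
  · simp [μ.toSphere_eq_zero_iff.2 ‹_›]
  let φ : ContDiffBump (1 : ℝ) := ⟨1 / 4, 1 / 2, by norm_num, by norm_num⟩
  have hφ0 : (0 : ℝ) ∉ tsupport φ := by
    rw [φ.tsupport_eq]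
    norm_num [φ]
  have hKs : IsPosHomogeneous s fun x =>
      ((finrank ℝ E + s) * A.rayleighQuotient x - LinearMap.trace ℝ E A) • G x := by
    have hcoeff : IsPosHomogeneous 0 fun x =>
        (finrank ℝ E + s) * A.rayleighQuotient x - LinearMap.trace ℝ E A := by
      intro t ht x hx
      simp only [isPosHomogeneous_rayleighQuotient A ht hx, Real.rpow_zero, one_smul]
    simpa only [zero_add] using hcoeff.smul hGs
  have hφ1 : φ 1 = 1 := φ.one_of_mem_closedBall (Metric.mem_closedBall_self φ.rIn_pos.le)
  have hpos := integral_norm_smul_norm_rpow_pos μ s φ.contDiff φ.hasCompactSupport hφ0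
    (fun _ => φ.nonneg) (by simp [hφ1])
  have hball := integral_norm_smul_fderiv_apply_clm μ A φ.contDiff φ.hasCompactSupport hφ0 hG hGs
  rw [integral_norm_smul_of_isPosHomogeneous μ φ (isPosHomogeneous_norm_rpow s)] at hpos
  rw [integral_norm_smul_of_isPosHomogeneous μ φ (hGs.fderiv_apply_clm A),
    integral_norm_smul_of_isPosHomogeneous μ φ hKs] at hball
  exact smul_right_injective V (left_ne_zero_of_smul hpos.ne') hball

theorem integral_lie_derivative_product_general (A : E →L[ℝ] E) {a b : ℝ} {f h : E → ℝ}
    (hf : ContDiffOn ℝ 1 f {0}ᶜ) (hh : ContDiffOn ℝ 1 h {0}ᶜ)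
    (hfa : IsPosHomogeneous a f) (hhb : IsPosHomogeneous b h) :
    ∫ y : Metric.sphere (0 : E) 1,
        (fderiv ℝ f y (A y) * h y + f y * fderiv ℝ h y (A y)) ∂μ.toSphere =
      ∫ y : Metric.sphere (0 : E) 1,
        ((finrank ℝ E + (a + b)) * ⟪A y, y⟫ - LinearMap.trace ℝ E A) * (f y * h y)
          ∂μ.toSphere := by
  have hprod := integral_toSphere_fderiv_apply_clm μ A (G := fun x => f x * h x) (hf.smul hh)
    (hfa.smul hhb)
  have hderiv (y : Metric.sphere (0 : E) 1) : fderiv ℝ (fun x => f x * h x) y (A y) =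
      fderiv ℝ f y (A y) * h y + f y * fderiv ℝ h y (A y) := by
    have hdiff {g : E → ℝ} (hg : ContDiffOn ℝ 1 g {0}ᶜ) : DifferentiableAt ℝ g y :=
      (hg.contDiffAt (isOpen_compl_singleton.mem_nhds (ne_zero_of_mem_unit_sphere y))
        ).differentiableAt one_ne_zero
    rw [fderiv_fun_mul (hdiff hf) (hdiff hh)]
    simp [add_comm, mul_comm]
  have hrayleigh (y : Metric.sphere (0 : E) 1) : A.rayleighQuotient y = ⟪A y, y⟫ := by
    simp [ContinuousLinearMap.rayleighQuotient, A.reApplyInnerSelf_apply]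
  simpa only [hderiv, hrayleigh, smul_eq_mul] using hprod

end Sphere

theorem toEuclideanCLM_apply_eq_mulVecE {n : ℕ} (X : Matrix (Fin n) (Fin n) ℝ)
    (y : EuclideanSpace ℝ (Fin n)) : Matrix.toEuclideanCLM (𝕜 := ℝ) X y = mulVecE X y :=
  rfl

theorem trace_toEuclideanCLM {ι 𝕜 : Type*} [Fintype ι] [DecidableEq ι] [RCLike 𝕜]
    (X : Matrix ι ι 𝕜) :
    LinearMap.trace 𝕜 (EuclideanSpace 𝕜 ι) (Matrix.toEuclideanCLM (𝕜 := 𝕜) X) = X.trace :=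
  X.trace_toLin_eq (EuclideanSpace.basisFun ι 𝕜).toBasis

/-- For `X` symmetric and trace free and `f, h` smooth `0`-homogeneous functions on `ℝⁿ \ {0}`:
`∫_{S^{n-1}} (⟨∇f(y), Xy⟩ h(y) + f(y) ⟨∇h(y), Xy⟩) dσ(y) = n ∫_{S^{n-1}} ⟨Xy,y⟩ f(y) h(y) dσ(y)`. -/
theorem integral_lie_derivative_product (n : ℕ) (hn : 2 ≤ n)
    (X : Matrix (Fin n) (Fin n) ℝ) (hX : X.IsSymm) (htr : X.trace = 0)
    (f h : EuclideanSpace ℝ (Fin n) → ℝ)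
    (hf : ContDiffOn ℝ (⊤ : ℕ∞) f {(0 : EuclideanSpace ℝ (Fin n))}ᶜ)
    (hh : ContDiffOn ℝ (⊤ : ℕ∞) h {(0 : EuclideanSpace ℝ (Fin n))}ᶜ)
    (hfhom : ∀ t : ℝ, 0 < t → ∀ y : EuclideanSpace ℝ (Fin n), y ≠ 0 → f (t • y) = f y)
    (hhhom : ∀ t : ℝ, 0 < t → ∀ y : EuclideanSpace ℝ (Fin n), y ≠ 0 → h (t • y) = h y) :
    ∫ y : Metric.sphere (0 : EuclideanSpace ℝ (Fin n)) 1,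
        (⟪gradient f y, mulVecE X y⟫ * h y + f y * ⟪gradient h y, mulVecE X y⟫)
        ∂(sphereMeasure n)
      = n * ∫ y : Metric.sphere (0 : EuclideanSpace ℝ (Fin n)) 1,
          ⟪mulVecE X y, (y : EuclideanSpace ℝ (Fin n))⟫ * f y * h y ∂(sphereMeasure n) := by
  have hgen := integral_lie_derivative_product_general volume (Matrix.toEuclideanCLM (𝕜 := ℝ) X)
    (a := 0) (b := 0) (hf.of_le (by simp)) (hh.of_le (by simp))
    (fun t ht y hy => by simpa using hfhom t ht y hy)
    (fun t ht y hy => by simpa using hhhom t ht y hy)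
  simpa [sphereMeasure, inner_gradient_left, toEuclideanCLM_apply_eq_mulVecE,
    trace_toEuclideanCLM, htr, mul_assoc, integral_const_mul] using hgen
end

section
/- Let s and m be integers with 1 ≤ m ≤ ⌊s/2⌋, and let ν be a real number with ν/2 + s − 2m − 1 > 0. Then Σ_{j=0}^{m} (−1)^j · binom(m,j) · (ν/2 + s − 2j − 1) · Γ(ν/2 + s − m − j − 1) / Γ(ν/2 + s − j) = 0. (For m = 0 the corresponding sum equals 1.) -/
/-! The sum telescopes: Zeilberger's algorithm writes its `j`-th term as `G (j + 1) - G j`, where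
`G` carries the factor `j * m.choose j` and so vanishes at both `j = 0` and `j = m + 1`. -/

theorem cast_choose_succ_mul_add_one {R : Type*} [Ring R] (m j : ℕ) :
    (m.choose (j + 1) : R) * (j + 1) = m.choose j * (m - j) := by
  rcases le_or_gt j m with hj | hj
  · rw [← Nat.cast_sub hj]
    exact_mod_cast congrArg (Nat.cast (R := R)) (Nat.choose_succ_right_eq m j)
  · simp [Nat.choose_eq_zero_of_lt hj, Nat.choose_eq_zero_of_lt (hj.trans j.lt_succ_self)]

theorem Gamma_eq_sub_one_mul_Gamma_sub_one {w : ℂ} (hw : w - 1 ≠ 0) :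
    Complex.Gamma w = (w - 1) * Complex.Gamma (w - 1) := by
  simpa only [sub_add_cancel] using Complex.Gamma_add_one (w - 1) hw

/-- The antidifference in `j` of the terms of `gamma_sum_eq_zero_general`, as produced by
Zeilberger's algorithm. For `m = 0` the division makes it the junk value `0`. -/
noncomputable def gammaAntidifference (m : ℕ) (z : ℂ) (j : ℕ) : ℂ :=
  -(-1) ^ j * (j / m * m.choose j) * (Complex.Gamma (z - m - j) / Complex.Gamma (z - j))

theorem gammaAntidifference_zero (m : ℕ) (z : ℂ) : gammaAntidifference m z 0 = 0 := by
  simp [gammaAntidifference]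

theorem gammaAntidifference_succ_self (m : ℕ) (z : ℂ) : gammaAntidifference m z (m + 1) = 0 := by
  simp [gammaAntidifference]

theorem gammaAntidifference_succ_sub {m j : ℕ} {z : ℂ} (hm : m ≠ 0)
    (hw : z - m - j - 1 ≠ 0) (hy : z - j - 1 ≠ 0) :
    gammaAntidifference m z (j + 1) - gammaAntidifference m z j =
      (-1) ^ j * m.choose j * (z - 2 * j - 1) * Complex.Gamma (z - m - j - 1) /
        Complex.Gamma (z - j) := by
  have hmC : (m : ℂ) ≠ 0 := Nat.cast_ne_zero.mpr hm
  have hcoeff : ((j + 1) / m * m.choose (j + 1) : ℂ) +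
      j / m * m.choose j * ((z - m - j - 1) / (z - j - 1)) =
        m.choose j * (z - 2 * j - 1) / (z - j - 1) := by
    field_simp
    linear_combination (z - j - 1) * cast_choose_succ_mul_add_one (R := ℂ) m j
  simp only [gammaAntidifference, Nat.cast_add_one, ← sub_sub]
  rw [Gamma_eq_sub_one_mul_Gamma_sub_one hw, Gamma_eq_sub_one_mul_Gamma_sub_one hy]
  simp only [mul_div_mul_comm]
  linear_combination (-1) ^ j *
    (Complex.Gamma (z - m - j - 1) / Complex.Gamma (z - j - 1)) * hcoeff

theorem gamma_sum_eq_zero_general {m : ℕ} (hm : m ≠ 0) {z : ℂ}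
    (hz : ∀ n : ℕ, z - 2 * m - 1 ≠ -n) :
    ∑ j ∈ Finset.range (m + 1), (-1) ^ j * (m.choose j : ℂ) * (z - 2 * j - 1) *
      Complex.Gamma (z - m - j - 1) / Complex.Gamma (z - j) = 0 := by
  have hterm : ∀ j ∈ Finset.range (m + 1),
      (-1) ^ j * (m.choose j : ℂ) * (z - 2 * j - 1) * Complex.Gamma (z - m - j - 1) /
        Complex.Gamma (z - j) = gammaAntidifference m z (j + 1) - gammaAntidifference m z j := by
    intro j hj
    -- The arguments of Γ are `z - 2 * m - 1` plus natural numbers, hence not poles.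
    obtain ⟨d, rfl⟩ := Nat.exists_eq_add_of_le (Finset.mem_range_succ_iff.mp hj)
    have hw : z - (j + d : ℕ) - j - 1 ≠ 0 := fun h ↦ hz d <| by
      push_cast at h ⊢; linear_combination h
    have hy : z - j - 1 ≠ 0 := fun h ↦ hz (j + 2 * d) <| by
      push_cast; linear_combination h
    exact (gammaAntidifference_succ_sub hm hw hy).symm
  rw [Finset.sum_congr rfl hterm, Finset.sum_range_sub, gammaAntidifference_succ_self,
    gammaAntidifference_zero, sub_zero]

/-- Zeilberger-type Gamma identity: for integers `1 ≤ m ≤ ⌊s/2⌋` and real `ν` with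
`ν/2 + s - 2m - 1 > 0`,
`∑_{j=0}^{m} (-1)^j C(m,j) (ν/2+s-2j-1) Γ(ν/2+s-m-j-1)/Γ(ν/2+s-j) = 0`. -/
theorem gamma_sum_eq_zero (s m : ℕ) (hm1 : 1 ≤ m) (hm : m ≤ s / 2) (ν : ℝ)
    (hν : 0 < ν / 2 + s - 2 * m - 1) :
    ∑ j ∈ Finset.range (m + 1),
        (-1 : ℝ) ^ j * (Nat.choose m j : ℝ) * (ν / 2 + s - 2 * j - 1) *
          Real.Gamma (ν / 2 + s - m - j - 1) / Real.Gamma (ν / 2 + s - j) = 0 := by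
  have hz (n : ℕ) : ν / 2 + s - 2 * m - 1 ≠ -n := by linarith [n.cast_nonneg (α := ℝ)]
  have hsum := gamma_sum_eq_zero_general (z := ν / 2 + s) (Nat.one_le_iff_ne_zero.mp hm1)
    (by exact_mod_cast hz)
  rw [← Complex.ofReal_inj]
  push_cast [← Complex.Gamma_ofReal]
  exact hsum
end

section
/- Let s ≥ 0 and m be integers with 0 ≤ m ≤ ⌊s/2⌋, and let ν and k be real numbers such that (k+s)/2 > m, (ν−k+s)/2 > m, and ν/2 + s − 2m − 1 > 0. Then Σ_{j=0}^{m} binom(m,j) · (ν/2 + s − 2j − 1) · Γ((k+s)/2 − j) · Γ(ν/2 + s − j − m − 1) / (Γ((ν−k+s)/2 − j) · Γ(ν/2 + s − j)) = Γ((k+s)/2 − m) / Γ((ν−k+s)/2). -/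
/-!
By Zeilberger's method: writing `F m j` for the `j`-th summand of the sum `S m`, there is a
certificate `R` with `(m + 1) * ((a - m - 1) * F (m + 1) j - F m j) = R m j - R m (j + 1)` that
vanishes at `j = 0` and at `j = m + 2`. Summing over `j` gives `(a - m - 1) * S (m + 1) = S m`,
which is the recurrence in `m` of `Γ(a - m) / Γ(b)`.
-/

section GammaSum

open Complex Finset

lemma Gamma_eq_sub_one_mul_Gamma_sub_one_s8 {z : ℂ} (hz : z - 1 ≠ 0) :
    Gamma z = (z - 1) * Gamma (z - 1) := by
  simpa only [sub_add_cancel] using Gamma_add_one (z - 1) hz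

lemma Gamma_sub_sub_one_eq_mul {z : ℂ} {m : ℕ} (hz : z - m - 2 ≠ 0) :
    Gamma (z - m - 1) = (z - m - 2) * Gamma (z - (m + 1 : ℕ) - 1) := by
  have hpred : z - m - 1 - 1 = z - m - 2 := by ring
  have hsucc : z - (m + 1 : ℕ) - 1 = z - m - 2 := by push_cast; ring
  rw [hsucc, ← hpred]
  exact Gamma_eq_sub_one_mul_Gamma_sub_one_s8 (hpred ▸ hz)

lemma inv_Gamma_sub_one (z : ℂ) : (Gamma (z - 1))⁻¹ = (z - 1) * (Gamma z)⁻¹ := by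
  simpa only [sub_add_cancel] using one_div_Gamma_eq_self_mul_one_div_Gamma_add_one (z - 1)

lemma ofReal_ne_neg_natCast {x : ℝ} (hx : 0 < x) (n : ℕ) : (x : ℂ) ≠ -n := by
  exact_mod_cast (neg_nonpos.2 n.cast_nonneg |>.trans_lt hx).ne'

/-- The `j`-th summand of the identity without its linear factor `a + b - 2 * j - 1`. The paper's
parameters are `a = (k + s) / 2` and `b = (ν - k + s) / 2`, so that `a + b = ν / 2 + s`. -/
noncomputable def gammaWeight (a b : ℂ) (m j : ℕ) : ℂ :=
  m.choose j * Gamma (a - j) * Gamma (a + b - j - m - 1) / (Gamma (b - j) * Gamma (a + b - j))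

/-- The Zeilberger certificate `R m j` of the sum over `j` of `(a + b - 2 * j - 1) * gammaWeight`,
scaled by `m + 1` to clear the denominator of the rational factor. -/
noncomputable def gammaCertificate (a b : ℂ) (m j : ℕ) : ℂ :=
  j * (m + 1).choose j * Gamma (a - j + 1) * Gamma (a + b - j - m - 1) /
    (Gamma (b - j) * Gamma (a + b - j))

variable {a b : ℂ} {m j : ℕ}

lemma succ_mul_gammaWeight (hj : j ≤ m + 1) (hc : a + b - j - m - 2 ≠ 0) :
    (m + 1) * gammaWeight a b m j =
      (m + 1 - j) * (a + b - j - m - 2) * gammaWeight a b (m + 1) j := by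
  have hchoose : (m.choose j : ℂ) * (m + 1) = (m + 1).choose j * (m + 1 - j) := by
    have := congrArg (Nat.cast (R := ℂ)) (m.choose_mul_succ_eq j)
    push_cast [Nat.cast_sub hj] at this
    exact this
  rw [gammaWeight, gammaWeight, Gamma_sub_sub_one_eq_mul hc]
  linear_combination (a + b - j - m - 2) * Gamma (a - j) *
    Gamma (a + b - j - (m + 1 : ℕ) - 1) / (Gamma (b - j) * Gamma (a + b - j)) * hchoose

lemma gammaCertificate_eq_mul_gammaWeight (ha : a - j ≠ 0) (hc : a + b - j - m - 2 ≠ 0) :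
    gammaCertificate a b m j =
      j * (a - j) * (a + b - j - m - 2) * gammaWeight a b (m + 1) j := by
  rw [gammaCertificate, gammaWeight, Gamma_add_one _ ha, Gamma_sub_sub_one_eq_mul hc]
  ring

lemma gammaCertificate_succ (hj : j ≤ m + 1) :
    gammaCertificate a b m (j + 1) =
      (m + 1 - j) * (b - j - 1) * (a + b - j - 1) * gammaWeight a b (m + 1) j := by
  have hchoose : ((m + 1).choose (j + 1) : ℂ) * (j + 1) = (m + 1).choose j * (m + 1 - j) := by
    have := congrArg (Nat.cast (R := ℂ)) ((m + 1).choose_succ_right_eq j)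
    push_cast [Nat.cast_sub hj] at this
    exact this
  have ha : a - ((j + 1 : ℕ) : ℂ) + 1 = a - j := by push_cast; ring
  have hb : b - ((j + 1 : ℕ) : ℂ) = b - j - 1 := by push_cast; ring
  have hc : a + b - ((j + 1 : ℕ) : ℂ) = a + b - j - 1 := by push_cast; ring
  have hm : a + b - j - 1 - m - 1 = a + b - j - ((m + 1 : ℕ) : ℂ) - 1 := by push_cast; ring
  rw [gammaCertificate, gammaWeight, ha, hb, hc, hm, div_eq_mul_inv, mul_inv,
    inv_Gamma_sub_one, inv_Gamma_sub_one]
  push_cast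
  linear_combination Gamma (a - j) * Gamma (a + b - j - (m + 1) - 1) *
    ((b - j - 1) * (Gamma (b - j))⁻¹ * ((a + b - j - 1) * (Gamma (a + b - j))⁻¹)) * hchoose

lemma gammaWeight_telescope (hj : j ≤ m + 1) (ha : a - j ≠ 0) (hc : a + b - j - m - 2 ≠ 0) :
    (m + 1) * ((a - m - 1) * ((a + b - 2 * j - 1) * gammaWeight a b (m + 1) j) -
        (a + b - 2 * j - 1) * gammaWeight a b m j) =
      gammaCertificate a b m j - gammaCertificate a b m (j + 1) := by
  rw [gammaCertificate_eq_mul_gammaWeight ha hc, gammaCertificate_succ hj]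
  linear_combination -(a + b - 2 * j - 1) * succ_mul_gammaWeight hj hc

lemma mul_sum_gammaWeight_succ (ha : ∀ j ≤ m + 1, a - j ≠ 0)
    (hc : ∀ j ≤ m + 1, a + b - j - m - 2 ≠ 0) :
    (a - m - 1) * ∑ j ∈ range (m + 2), (a + b - 2 * j - 1) * gammaWeight a b (m + 1) j =
      ∑ j ∈ range (m + 1), (a + b - 2 * j - 1) * gammaWeight a b m j := by
  have hlast : gammaWeight a b m (m + 1) = 0 := by simp [gammaWeight]
  have hstart : gammaCertificate a b m 0 = 0 := by simp [gammaCertificate]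
  have hend : gammaCertificate a b m (m + 2) = 0 := by simp [gammaCertificate]
  have htelescope := sum_congr rfl fun j (hj : j ∈ range (m + 2)) ↦
    have hj : j ≤ m + 1 := Nat.le_of_lt_succ (mem_range.1 hj)
    gammaWeight_telescope hj (ha j hj) (hc j hj)
  rw [sum_range_sub', hstart, hend, sub_zero, ← mul_sum, sum_sub_distrib, ← mul_sum,
    sum_range_succ (fun j : ℕ ↦ (a + b - 2 * j - 1) * gammaWeight a b m j), hlast, mul_zero,
    add_zero] at htelescope
  exact sub_eq_zero.1 ((mul_eq_zero.1 htelescope).resolve_left m.cast_add_one_ne_zero)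

lemma sum_gammaWeight (ha : ∀ n : ℕ, a - m ≠ -n) (hc : ∀ n : ℕ, a + b - 2 * m - 1 ≠ -n) :
    ∑ j ∈ range (m + 1), (a + b - 2 * j - 1) * gammaWeight a b m j =
      Gamma (a - m) / Gamma b := by
  induction m with
  | zero =>
    have hab : a + b - 1 ≠ 0 := by simpa using hc 0
    have hΓ : Gamma (a + b - 1) ≠ 0 := Gamma_ne_zero (by simpa using hc)
    simp only [gammaWeight, zero_add, sum_range_one, Nat.choose_self, Nat.cast_zero, Nat.cast_one,
      mul_zero, sub_zero, one_mul, Gamma_eq_sub_one_mul_Gamma_sub_one_s8 hab]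
    field_simp
  | succ m ih =>
    have ha_ne : ∀ j ≤ m + 1, a - j ≠ 0 := fun j hj h ↦
      ha (m + 1 - j) (by push_cast [Nat.cast_sub hj]; linear_combination h)
    have hc_ne : ∀ j ≤ m + 1, a + b - j - m - 2 ≠ 0 := fun j hj h ↦
      hc (m + 1 - j) (by push_cast [Nat.cast_sub hj]; linear_combination h)
    have hsum : ∑ j ∈ range (m + 1), (a + b - 2 * j - 1) * gammaWeight a b m j =
        Gamma (a - m) / Gamma b :=
      ih (fun n h ↦ ha (n + 1) (by push_cast; linear_combination h))
        (fun n h ↦ hc (n + 2) (by push_cast; linear_combination h))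
    have hsucc : a - (m + 1 : ℕ) = a - m - 1 := by push_cast; ring
    have hne : a - m - 1 ≠ 0 := by simpa only [hsucc, Nat.cast_zero, neg_zero] using ha 0
    rw [← mul_sum_gammaWeight_succ ha_ne hc_ne, Gamma_eq_sub_one_mul_Gamma_sub_one_s8 hne,
      mul_div_assoc] at hsum
    rw [hsucc]
    exact mul_left_cancel₀ hne hsum

-- Where `b - j` is a pole of `Γ`, the conventions `Γ = 0` and `x / 0 = 0` give the value of the
-- entire function `1 / Γ`.
theorem gamma_sum_fourier_general (ha : ∀ n : ℕ, a - m ≠ -n)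
    (hc : ∀ n : ℕ, a + b - 2 * m - 1 ≠ -n) :
    ∑ j ∈ range (m + 1),
        (m.choose j : ℂ) * (a + b - 2 * j - 1) * Gamma (a - j) * Gamma (a + b - j - m - 1) /
          (Gamma (b - j) * Gamma (a + b - j)) =
      Gamma (a - m) / Gamma b := by
  rw [← sum_gammaWeight ha hc]
  refine sum_congr rfl fun j _ ↦ ?_
  rw [gammaWeight]
  ring

lemma sum_real_Gamma {a b : ℝ} (ha : 0 < a - m) (hc : 0 < a + b - 2 * m - 1) :
    ∑ j ∈ range (m + 1),
        (m.choose j : ℝ) * (a + b - 2 * j - 1) * Real.Gamma (a - j) *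
          Real.Gamma (a + b - j - m - 1) / (Real.Gamma (b - j) * Real.Gamma (a + b - j)) =
      Real.Gamma (a - m) / Real.Gamma b := by
  have hcomplex := gamma_sum_fourier_general (a := a) (b := b) (m := m)
    (by exact_mod_cast ofReal_ne_neg_natCast ha) (by exact_mod_cast ofReal_ne_neg_natCast hc)
  apply ofReal_injective
  push_cast [← Gamma_ofReal]
  exact hcomplex

end GammaSum

/-- Zeilberger-type Gamma identity underlying the Alesker–Fourier transform of the
Minkowski tensors: for integers `0 ≤ m ≤ ⌊s/2⌋` and real `ν, k` with `(k+s)/2 > m`,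
`(ν-k+s)/2 > m`, `ν/2 + s - 2m - 1 > 0`,
`∑_{j=0}^{m} C(m,j) (ν/2+s-2j-1) Γ((k+s)/2-j) Γ(ν/2+s-j-m-1) / (Γ((ν-k+s)/2-j) Γ(ν/2+s-j))
  = Γ((k+s)/2-m)/Γ((ν-k+s)/2)`. -/
theorem gamma_sum_fourier (s m : ℕ) (hm : m ≤ s / 2) (ν k : ℝ)
    (h1 : (m : ℝ) < (k + s) / 2) (h2 : (m : ℝ) < (ν - k + s) / 2)
    (h3 : 0 < ν / 2 + s - 2 * m - 1) :
    ∑ j ∈ Finset.range (m + 1),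
        (Nat.choose m j : ℝ) * (ν / 2 + s - 2 * j - 1) * Real.Gamma ((k + s) / 2 - j) *
          Real.Gamma (ν / 2 + s - j - m - 1) /
          (Real.Gamma ((ν - k + s) / 2 - j) * Real.Gamma (ν / 2 + s - j))
      = Real.Gamma ((k + s) / 2 - m) / Real.Gamma ((ν - k + s) / 2) := by
  have hab : (k + s) / 2 + (ν - k + s) / 2 = ν / 2 + s := by ring
  simpa only [hab] using
    sum_real_Gamma (b := (ν - k + s) / 2) (sub_pos.2 h1) (by rwa [hab])
end
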